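/- arXiv:2312.15995 — 3 statements merged into one kernel-verified Lean document; each statement's English description precedes it below -/
import Mathlib

section
/- Theorem 1 (eigenvalues of kernel matrices, upper bound). There exist absolute constants c, c₂ > 0 with the following property. Assume β_k < ∞ for all k, that the eigenvalues are in non-increasing order λ_1 ≥ λ_2 ≥ …, and the regularity assumption holds. Then for every n ≥ 1 and every k ∈ {1,…,n}, with probability at least 1 − 4·(r_k/k⁴)·exp(−(c/β_k)·(n/r_k)) − 2·exp(−(c/β_k)·max(n/k, log k)) over X = (x_1,…,x_n) drawn i.i.d. from μ, the k-th largest eigenvalue of the normalized kernel matrix satisfies μ_k((1/n)K) ≤ c₂·β_k·( (1 + k·log(k)/n)·λ_k + log(k+1)·tr(Σ_{>k})/n ). -/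
open MeasureTheory Matrix Filter

noncomputable section

namespace KRRPaper

universe u

variable {𝒳 : Type u}

/-- `tr(Σ_{>k})`, with 0-based indexing (Lean index `i` = paper index `i+1`). -/
def trTail (lam : ℕ → ℝ) (k : ℕ) : ℝ := ∑' i : ℕ, lam (k + i)

/-- `tr(Σ_{>k}²)` -/
def trTailSq (lam : ℕ → ℝ) (k : ℕ) : ℝ := ∑' i : ℕ, (lam (k + i)) ^ 2

/-- `‖Σ_{>k}‖ = sup_{i>k} λ_i` -/
def opTail (lam : ℕ → ℝ) (k : ℕ) : ℝ := ⨆ i : ℕ, lam (k + i)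

/-- effective rank `r_k` -/
def rEff (lam : ℕ → ℝ) (k : ℕ) : ℝ := trTail lam k / opTail lam k

/-- effective rank `R_k` -/
def REff (lam : ℕ → ℝ) (k : ℕ) : ℝ := (trTail lam k) ^ 2 / trTailSq lam k

/-- the function whose essential supremum defines `β_k` -/
def betaF (lam : ℕ → ℝ) (ψ : ℕ → 𝒳 → ℝ) (k : ℕ) (x : 𝒳) : ℝ :=
  max (max ((∑ i ∈ Finset.range k, (ψ i x) ^ 2) / k)
        ((∑' i : ℕ, lam (k + i) * (ψ (k + i) x) ^ 2) / trTail lam k))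
      ((∑' i : ℕ, (lam (k + i)) ^ 2 * (ψ (k + i) x) ^ 2) / trTailSq lam k)

/-- `β_k`, the essential supremum of `betaF` -/
def betaQ [MeasurableSpace 𝒳] (μ : Measure 𝒳) (lam : ℕ → ℝ) (ψ : ℕ → 𝒳 → ℝ) (k : ℕ) : ℝ :=
  essSup (betaF lam ψ k) μ

def alphaF (lam : ℕ → ℝ) (ψ : ℕ → 𝒳 → ℝ) (k : ℕ) (x : 𝒳) : ℝ :=
  (∑' i : ℕ, lam (k + i) * (ψ (k + i) x) ^ 2) / trTail lam k

/-- `α_k`, the essential infimum of `alphaF` -/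
def alphaQ [MeasurableSpace 𝒳] (μ : Measure 𝒳) (lam : ℕ → ℝ) (ψ : ℕ → 𝒳 → ℝ) (k : ℕ) : ℝ :=
  essInf (alphaF lam ψ k) μ

/-- the hypothesis `β_k < ∞` -/
def BetaFinite [MeasurableSpace 𝒳] (μ : Measure 𝒳) (lam : ℕ → ℝ) (ψ : ℕ → 𝒳 → ℝ) (k : ℕ) : Prop :=
  ∃ C : ℝ, ∀ᵐ x ∂μ, betaF lam ψ k x ≤ C

/-- `(ψ_i)` is an orthonormal family in `L²(μ)` -/
def OrthonormalFamily [MeasurableSpace 𝒳] (μ : Measure 𝒳) (ψ : ℕ → 𝒳 → ℝ) : Prop :=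
  (∀ i, MemLp (ψ i) 2 μ) ∧
    ∀ i j, ∫ x, ψ i x * ψ j x ∂μ = if i = j then (1 : ℝ) else 0

/-- the regularity assumption -/
def RegularityAssumption [MeasurableSpace 𝒳] (μ : Measure 𝒳) (lam : ℕ → ℝ)
    (ψ : ℕ → 𝒳 → ℝ) : Prop :=
  (∃ N : ℕ, ∀ i, N ≤ i → lam i = 0) ∨
    ∃ ks : ℕ → ℕ, StrictMono ks ∧
      Tendsto (fun i => betaQ μ lam ψ (ks i) * trTail lam (ks i)) atTop (nhds 0)

/-- the kernel matrix `K` -/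
def kerMat (lam : ℕ → ℝ) (ψ : ℕ → 𝒳 → ℝ) {n : ℕ} (X : Fin n → 𝒳) :
    Matrix (Fin n) (Fin n) ℝ :=
  Matrix.of fun j l => ∑' i : ℕ, lam i * ψ i (X j) * ψ i (X l)

/-- the tail kernel matrix `K_{>k}` -/
def kerMatGT (lam : ℕ → ℝ) (ψ : ℕ → 𝒳 → ℝ) (k : ℕ) {n : ℕ} (X : Fin n → 𝒳) :
    Matrix (Fin n) (Fin n) ℝ :=
  Matrix.of fun j l => ∑' i : ℕ, lam (k + i) * ψ (k + i) (X j) * ψ (k + i) (X l)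

/-- the matrix `M` with entries `∑ᵢ λᵢ² ψᵢ(x_j) ψᵢ(x_l)` -/
def sqKerMat (lam : ℕ → ℝ) (ψ : ℕ → 𝒳 → ℝ) {n : ℕ} (X : Fin n → 𝒳) :
    Matrix (Fin n) (Fin n) ℝ :=
  Matrix.of fun j l => ∑' i : ℕ, (lam i) ^ 2 * ψ i (X j) * ψ i (X l)

/-- `ψ_{≤k}(X)`, the `n × k` design matrix -/
def psiMat (ψ : ℕ → 𝒳 → ℝ) (k : ℕ) {n : ℕ} (X : Fin n → 𝒳) :
    Matrix (Fin n) (Fin k) ℝ :=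
  Matrix.of fun j i => ψ (i : ℕ) (X j)

/-- `eigval M j` is the `j`-th largest eigenvalue (`j` is 1-based) of a real symmetric
matrix `M`; junk value `0` if `M` is not symmetric or `j` is out of range. -/
def eigval {n : ℕ} (M : Matrix (Fin n) (Fin n) ℝ) (j : ℕ) : ℝ := by
  classical
  exact if h : M.IsHermitian then
    if hj : j - 1 < n then
      (h.eigenvalues ∘ ⇑(Tuple.sort h.eigenvalues)) (Fin.rev ⟨j - 1, hj⟩)
    else 0
  else 0

/-- `A = K + nγ_n I` -/
def ridgeMat (lam : ℕ → ℝ) (ψ : ℕ → 𝒳 → ℝ) {n : ℕ} (X : Fin n → 𝒳) (γ : ℝ) :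
    Matrix (Fin n) (Fin n) ℝ :=
  kerMat lam ψ X + ((n : ℝ) * γ) • (1 : Matrix (Fin n) (Fin n) ℝ)

/-- the variance `V = σ_ε² tr(A⁻¹ M A⁻¹)` of kernel ridge regression -/
def varKRR (lam : ℕ → ℝ) (ψ : ℕ → 𝒳 → ℝ) {n : ℕ} (X : Fin n → 𝒳) (γ σ : ℝ) : ℝ :=
  σ ^ 2 * ((ridgeMat lam ψ X γ)⁻¹ * sqKerMat lam ψ X * (ridgeMat lam ψ X γ)⁻¹).trace

/-- the KRR coefficient vector `θ̂(y)` -/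
def thetaHat (lam : ℕ → ℝ) (ψ : ℕ → 𝒳 → ℝ) {n : ℕ} (X : Fin n → 𝒳) (γ : ℝ)
    (y : Fin n → ℝ) (i : ℕ) : ℝ :=
  Real.sqrt (lam i) * ∑ j, ψ i (X j) * ((ridgeMat lam ψ X γ)⁻¹ *ᵥ y) j

/-- the noiseless labels `φ(X)θ*` -/
def labels (lam : ℕ → ℝ) (ψ : ℕ → 𝒳 → ℝ) {n : ℕ} (X : Fin n → 𝒳) (θ : ℕ → ℝ) :
    Fin n → ℝ :=
  fun j => ∑' i : ℕ, Real.sqrt (lam i) * ψ i (X j) * θ i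

/-- the bias `B` of kernel ridge regression -/
def biasKRR (lam : ℕ → ℝ) (ψ : ℕ → 𝒳 → ℝ) {n : ℕ} (X : Fin n → 𝒳) (γ : ℝ) (θ : ℕ → ℝ) : ℝ :=
  ∑' i : ℕ, lam i * (thetaHat lam ψ X γ (labels lam ψ X θ) i - θ i) ^ 2

/-- the concentration coefficient `ρ_{k,n}` -/
def rhoCoef (lam : ℕ → ℝ) (ψ : ℕ → 𝒳 → ℝ) (k : ℕ) {n : ℕ} (X : Fin n → 𝒳) (γ : ℝ) : ℝ :=
  (opTail lam k + eigval ((n : ℝ)⁻¹ • kerMatGT lam ψ k X) 1 + γ) /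
    (eigval ((n : ℝ)⁻¹ • kerMatGT lam ψ k X) n + γ)

/-- the i.i.d. sample measure `μ^{⊗n}` on `Fin n → 𝒳` -/
def iid [MeasurableSpace 𝒳] (μ : Measure 𝒳) (n : ℕ) : Measure (Fin n → 𝒳) :=
  Measure.pi fun _ => μ

/-!
On the orthogonal complement of the first `k - 1` feature columns, a space of codimension less
than `k`, the quadratic form of `K` is at most `λ_k` times the form of `ψ_{≤k} ψ_{≤k}ᵀ` plus the
form of `K_{>k}`. By Courant–Fischer it suffices to bound these two forms, and each bound has the
shape `‖∑ⱼ zⱼ v(xⱼ)‖² ≤ t ‖z‖²`, which by duality concerns the largest eigenvalue of the scatter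
matrix `S = ∑ⱼ v(xⱼ) v(xⱼ)ᵀ`.

The latter is controlled by a matrix Chernoff argument with potential `tr (e^S - 1)`. If `‖v‖ ≤ 1`,
replacing `S` by `S + v vᵀ` raises `tr e^S` by at most `(e - 1) vᵀ e^S v`; comparing power series,
this follows from Chebyshev's sum inequality, which takes the place of Golden–Thompson. If `𝔼 v vᵀ`
has operator norm at most `W` and trace at most `T`, each sample therefore multiplies
`𝔼 tr (e^S - 1) + T / W` by at most `1 + (e - 1) W`. Only the intrinsic dimension `T / W` enters,
not the number of features, so the bound passes to the infinite tail.
-/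

section MatrixExponential

open NormedSpace
open scoped MatrixOrder

variable {m : Type*} [Fintype m] {A S : Matrix m m ℝ}

theorem sum_weighted_mul_sum_weighted_le_of_monovary {w f g : m → ℝ}
    (hw : ∀ i, 0 ≤ w i) (hfg : Monovary f g) :
    (∑ i, w i * f i) * ∑ i, w i * g i ≤ (∑ i, w i) * ∑ i, w i * (f i * g i) := by
  have hdouble : 2 * ((∑ i, w i) * ∑ i, w i * (f i * g i) -
      (∑ i, w i * f i) * ∑ i, w i * g i) =
      ∑ i, ∑ j, w i * w j * ((f j - f i) * (g j - g i)) := by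
    have hsymm (i j : m) : w i * w j * ((f j - f i) * (g j - g i)) =
        (w i * (w j * (f j * g j)) - w i * f i * (w j * g j)) +
          (w j * (w i * (f i * g i)) - w j * f j * (w i * g i)) := by ring
    simp_rw [hsymm, Finset.sum_add_distrib]
    rw [Finset.sum_comm (f := fun i j => w j * _ - _), ← two_mul]
    simp only [Finset.sum_sub_distrib, Finset.sum_mul_sum]
  have hnonneg : 0 ≤ ∑ i, ∑ j, w i * w j * ((f j - f i) * (g j - g i)) :=
    Finset.sum_nonneg fun i _ => Finset.sum_nonneg fun j _ =>
      mul_nonneg (mul_nonneg (hw i) (hw j)) (monovary_iff_forall_mul_nonneg.1 hfg i j)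
  linarith

theorem dotProduct_vecMulVec_mulVec (A B : Matrix m m ℝ) (v : m → ℝ) :
    v ⬝ᵥ ((A * vecMulVec v v * B) *ᵥ v) = (v ⬝ᵥ (A *ᵥ v)) * (v ⬝ᵥ (B *ᵥ v)) := by
  rw [← mulVec_mulVec, ← mulVec_mulVec, vecMulVec_mulVec]
  simp only [op_smul_eq_smul, mulVec_smul, dotProduct_smul, smul_eq_mul, mul_comm]

variable [DecidableEq m]

theorem dotProduct_cfc_mulVec (hA : A.IsHermitian) (f : ℝ → ℝ) (v : m → ℝ) :
    v ⬝ᵥ (cfc f A *ᵥ v) =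
      ∑ i, ((hA.eigenvectorUnitary : Matrix m m ℝ)ᵀ *ᵥ v) i ^ 2 * f (hA.eigenvalues i) := by
  rw [hA.cfc_eq, Matrix.IsHermitian.cfc, Unitary.conjStarAlgAut_apply, ← mulVec_mulVec,
    ← mulVec_mulVec, dotProduct_mulVec, ← mulVec_transpose, star_eq_conjTranspose,
    conjTranspose_eq_transpose_of_trivial]
  simp only [dotProduct, mulVec_diagonal, Function.comp_apply, RCLike.ofReal_real_eq_id, id_eq]
  exact Finset.sum_congr rfl fun i _ => by ring

theorem dotProduct_mulVec_eq_sum_eigenvalues (hA : A.IsHermitian) (v : m → ℝ) :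
    v ⬝ᵥ (A *ᵥ v) =
      ∑ i, ((hA.eigenvectorUnitary : Matrix m m ℝ)ᵀ *ᵥ v) i ^ 2 * hA.eigenvalues i := by
  have hA' : IsSelfAdjoint A := hA
  simpa only [cfc_id' ℝ A] using dotProduct_cfc_mulVec hA (fun x => x) v

theorem dotProduct_self_eq_sum_eigenvectorUnitary (hA : A.IsHermitian) (v : m → ℝ) :
    v ⬝ᵥ v = ∑ i, ((hA.eigenvectorUnitary : Matrix m m ℝ)ᵀ *ᵥ v) i ^ 2 := by
  have hA' : IsSelfAdjoint A := hA
  simpa only [cfc_const_one ℝ A, one_mulVec, mul_one] using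
    dotProduct_cfc_mulVec hA (fun _ => 1) v

theorem trace_cfc (hA : A.IsHermitian) (f : ℝ → ℝ) :
    (cfc f A).trace = ∑ i, f (hA.eigenvalues i) := by
  rw [hA.cfc_eq, Matrix.IsHermitian.cfc, Unitary.conjStarAlgAut_apply, trace_mul_cycle,
    Unitary.coe_star_mul_self, one_mul, trace_diagonal]
  rfl

theorem dotProduct_cfc_mul_dotProduct_cfc_le (hA : A.IsHermitian) {f g : ℝ → ℝ}
    (hfg : Monovary (f ∘ hA.eigenvalues) (g ∘ hA.eigenvalues)) (v : m → ℝ) :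
    (v ⬝ᵥ (cfc f A *ᵥ v)) * (v ⬝ᵥ (cfc g A *ᵥ v)) ≤
      (v ⬝ᵥ v) * (v ⬝ᵥ (cfc (fun x => f x * g x) A *ᵥ v)) := by
  rw [dotProduct_self_eq_sum_eigenvectorUnitary hA, dotProduct_cfc_mulVec hA,
    dotProduct_cfc_mulVec hA, dotProduct_cfc_mulVec hA]
  exact sum_weighted_mul_sum_weighted_le_of_monovary (fun _ => sq_nonneg _) hfg

theorem dotProduct_add_one_pow_mul_dotProduct_pow_le (hS : S.PosSemidef) (i j : ℕ) (v : m → ℝ) :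
    (v ⬝ᵥ ((S + 1) ^ j *ᵥ v)) * (v ⬝ᵥ (S ^ i *ᵥ v)) ≤
      (v ⬝ᵥ v) * (v ⬝ᵥ (((S + 1) ^ j * S ^ i) *ᵥ v)) := by
  have hS' : IsSelfAdjoint S := hS.isHermitian
  have hpow : cfc (fun x : ℝ => x ^ i) S = S ^ i := cfc_pow_id S i
  have hpow_add : cfc (fun x : ℝ => (x + 1) ^ j) S = (S + 1) ^ j := by
    rw [cfc_pow (fun x : ℝ => x + 1) j S, cfc_add_const 1 (fun x : ℝ => x) S, cfc_id' ℝ S, map_one]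
  have hmono : Monovary ((fun x : ℝ => (x + 1) ^ j) ∘ hS.isHermitian.eigenvalues)
      ((fun x : ℝ => x ^ i) ∘ hS.isHermitian.eigenvalues) := fun a b hab => by
    have hlt := lt_of_pow_lt_pow_left₀ i (hS.eigenvalues_nonneg b) hab
    exact pow_le_pow_left₀ (add_nonneg (hS.eigenvalues_nonneg a) zero_le_one)
      (by linarith) j
  rw [← hpow, ← hpow_add, ← cfc_mul (fun x : ℝ => (x + 1) ^ j) (fun x : ℝ => x ^ i) S]
  exact dotProduct_cfc_mul_dotProduct_cfc_le hS.isHermitian hmono v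

theorem dotProduct_add_vecMulVec_pow_le (hS : S.PosSemidef) {v : m → ℝ} (hv : v ⬝ᵥ v ≤ 1)
    (i j : ℕ) :
    v ⬝ᵥ (((S + vecMulVec v v) ^ j * S ^ i) *ᵥ v) ≤ v ⬝ᵥ (((S + 1) ^ j * S ^ i) *ᵥ v) := by
  induction j generalizing i with
  | zero => simp
  | succ j ih =>
    have hS_nonneg : 0 ≤ v ⬝ᵥ (S ^ i *ᵥ v) := (hS.pow i).dotProduct_mulVec_nonneg v
    have hmix_nonneg : 0 ≤ v ⬝ᵥ (((S + 1) ^ j * S ^ i) *ᵥ v) := by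
      have hcomm : Commute ((S + 1) ^ j) (S ^ i) :=
        ((Commute.refl S).add_left (Commute.one_left S)).pow_pow j i
      exact (hcomm.mul_nonneg ((hS.add PosSemidef.one).pow j).nonneg
        (hS.pow i).nonneg).posSemidef.dotProduct_mulVec_nonneg v
    have hstep : v ⬝ᵥ ((S + 1) ^ j *ᵥ v) * (v ⬝ᵥ (S ^ i *ᵥ v)) ≤
        v ⬝ᵥ (((S + 1) ^ j * S ^ i) *ᵥ v) :=
      (dotProduct_add_one_pow_mul_dotProduct_pow_le hS i j v).trans
        (mul_le_of_le_one_left hmix_nonneg hv)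
    have ih_zero : v ⬝ᵥ ((S + vecMulVec v v) ^ j *ᵥ v) ≤ v ⬝ᵥ ((S + 1) ^ j *ᵥ v) := by
      simpa using ih 0
    calc v ⬝ᵥ (((S + vecMulVec v v) ^ (j + 1) * S ^ i) *ᵥ v)
        = v ⬝ᵥ (((S + vecMulVec v v) ^ j * S ^ (i + 1)) *ᵥ v) +
            v ⬝ᵥ ((S + vecMulVec v v) ^ j *ᵥ v) * (v ⬝ᵥ (S ^ i *ᵥ v)) := by
          rw [← dotProduct_vecMulVec_mulVec, ← dotProduct_add, ← add_mulVec, pow_succ, pow_succ']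
          noncomm_ring
      _ ≤ v ⬝ᵥ (((S + 1) ^ j * S ^ (i + 1)) *ᵥ v) + v ⬝ᵥ (((S + 1) ^ j * S ^ i) *ᵥ v) :=
          add_le_add (ih (i + 1)) ((mul_le_mul_of_nonneg_right ih_zero hS_nonneg).trans hstep)
      _ = v ⬝ᵥ (((S + 1) ^ (j + 1) * S ^ i) *ᵥ v) := by
          rw [← dotProduct_add, ← add_mulVec, pow_succ (S + 1), pow_succ' S i]
          noncomm_ring

theorem trace_add_vecMulVec_pow_mul_pow_le (hS : S.PosSemidef) {v : m → ℝ} (hv : v ⬝ᵥ v ≤ 1)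
    (i j : ℕ) :
    ((S + vecMulVec v v) ^ j * S ^ i).trace ≤
      (S ^ j * S ^ i).trace + v ⬝ᵥ ((((S + 1) ^ j - S ^ j) * S ^ i) *ᵥ v) := by
  induction j generalizing i with
  | zero => simp
  | succ j ih =>
    calc ((S + vecMulVec v v) ^ (j + 1) * S ^ i).trace
        = ((S + vecMulVec v v) ^ j * S ^ (i + 1)).trace +
            v ⬝ᵥ (((S + vecMulVec v v) ^ j * S ^ i) *ᵥ v) := by
          have hrank : (vecMulVec v v * ((S + vecMulVec v v) ^ j * S ^ i)).trace =
              v ⬝ᵥ (((S + vecMulVec v v) ^ j * S ^ i) *ᵥ v) := by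
            rw [vecMulVec_mul, trace_vecMulVec, dotProduct_mulVec, dotProduct_comm]
          rw [← hrank, pow_succ' _ j, mul_assoc, add_mul, trace_add, trace_mul_comm S, mul_assoc,
            ← pow_succ]
      _ ≤ (S ^ j * S ^ (i + 1)).trace + v ⬝ᵥ ((((S + 1) ^ j - S ^ j) * S ^ (i + 1)) *ᵥ v) +
            v ⬝ᵥ (((S + 1) ^ j * S ^ i) *ᵥ v) :=
          add_le_add (ih (i + 1)) (dotProduct_add_vecMulVec_pow_le hS hv i j)
      _ = (S ^ (j + 1) * S ^ i).trace +
            v ⬝ᵥ ((((S + 1) ^ (j + 1) - S ^ (j + 1)) * S ^ i) *ᵥ v) := by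
          rw [add_assoc, ← dotProduct_add, ← add_mulVec]
          simp only [pow_succ, pow_succ' S i]
          noncomm_ring

theorem trace_add_vecMulVec_pow_le (hS : S.PosSemidef) {v : m → ℝ} (hv : v ⬝ᵥ v ≤ 1) (p : ℕ) :
    ((S + vecMulVec v v) ^ p).trace ≤ (S ^ p).trace + v ⬝ᵥ (((S + 1) ^ p - S ^ p) *ᵥ v) := by
  simpa using trace_add_vecMulVec_pow_mul_pow_le hS hv 0 p

open scoped Matrix.Norms.L2Operator in
theorem exp_eq_cfc (hA : A.IsHermitian) : exp A = cfc Real.exp A :=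
  (CFC.real_exp_eq_normedSpace_exp hA).symm

open scoped Matrix.Norms.L2Operator in
theorem hasSum_linearMap_exp (L : Matrix m m ℝ →ₗ[ℝ] ℝ) (A : Matrix m m ℝ) :
    HasSum (fun p : ℕ => (p.factorial : ℝ)⁻¹ * L (A ^ p)) (L (exp A)) := by
  simpa [Function.comp_def] using
    (exp_series_hasSum_exp' (𝕂 := ℝ) A).map L L.continuous_of_finiteDimensional

open scoped Matrix.Norms.L2Operator in
theorem exp_add_one (A : Matrix m m ℝ) : exp (A + 1) = Real.exp 1 • exp A := by
  have hone : exp (1 : Matrix m m ℝ) = algebraMap ℝ _ (Real.exp 1) := by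
    rw [Real.exp_eq_exp_ℝ, algebraMap_exp_comm, map_one]
  rw [Matrix.exp_add_of_commute A 1 (Commute.one_right A), hone, ← Algebra.commutes,
    ← Algebra.smul_def]

theorem trace_exp_add_vecMulVec_le (hS : S.PosSemidef) {v : m → ℝ} (hv : v ⬝ᵥ v ≤ 1) :
    (exp (S + vecMulVec v v)).trace ≤
      (exp S).trace + (Real.exp 1 - 1) * (v ⬝ᵥ (exp S *ᵥ v)) := by
  let q : Matrix m m ℝ →ₗ[ℝ] ℝ := dotProductBilin ℝ ℝ v ∘ₗ (mulVecBilin ℝ ℝ).flip v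
  have htrace := hasSum_linearMap_exp (traceLinearMap m ℝ ℝ)
  have hquad := hasSum_linearMap_exp q
  have hincrement : (Real.exp 1 - 1) * q (exp S) = q (exp (S + 1)) - q (exp S) := by
    rw [exp_add_one, map_smul, smul_eq_mul, sub_one_mul]
  change _ ≤ _ + (Real.exp 1 - 1) * q (exp S)
  rw [hincrement]
  refine hasSum_le (fun p => ?_) (htrace (S + vecMulVec v v))
    ((htrace S).add ((hquad (S + 1)).sub (hquad S)))
  rw [← mul_sub, ← mul_add, ← map_sub]
  exact mul_le_mul_of_nonneg_left (trace_add_vecMulVec_pow_le hS hv p) (by positivity)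

/-- The shifted trace exponential `tr (exp S - 1)`. Subtracting the identity makes it vanish at
`S = 0` independently of the dimension, which is what makes intrinsic-dimension bounds possible. -/
def traceExpSubOne (S : Matrix m m ℝ) : ℝ := (exp S - 1).trace

theorem traceExpSubOne_zero : traceExpSubOne (0 : Matrix m m ℝ) = 0 := by
  simp [traceExpSubOne]

open scoped Matrix.Norms.L2Operator in
theorem continuous_traceExpSubOne : Continuous (traceExpSubOne : Matrix m m ℝ → ℝ) :=
  letI : NormedAlgebra ℚ (Matrix m m ℝ) := .restrictScalars ℚ ℝ _
  (exp_continuous.sub continuous_const).matrix_trace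

theorem exp_sub_one_eq_cfc (hA : A.IsHermitian) :
    exp A - 1 = cfc (fun x => Real.exp x - 1) A := by
  rw [cfc_sub Real.exp (fun _ => 1) A, cfc_const_one ℝ A, exp_eq_cfc hA]

theorem posSemidef_exp_sub_one (hS : S.PosSemidef) : (exp S - 1).PosSemidef := by
  rw [exp_sub_one_eq_cfc hS.isHermitian, ← nonneg_iff_posSemidef]
  exact cfc_nonneg fun x hx =>
    sub_nonneg.2 (Real.one_le_exp (spectrum_nonneg_of_nonneg hS.nonneg hx))

theorem traceExpSubOne_nonneg (hS : S.PosSemidef) : 0 ≤ traceExpSubOne S :=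
  (posSemidef_exp_sub_one hS).trace_nonneg

theorem exists_lt_eigenvalues (hA : A.IsHermitian) {t : ℝ} {q : m → ℝ}
    (hq : t * (q ⬝ᵥ q) < q ⬝ᵥ (A *ᵥ q)) : ∃ i, t < hA.eigenvalues i := by
  by_contra! hle
  rw [dotProduct_mulVec_eq_sum_eigenvalues hA, dotProduct_self_eq_sum_eigenvectorUnitary hA,
    Finset.mul_sum] at hq
  refine hq.not_ge (Finset.sum_le_sum fun i _ => ?_)
  rw [mul_comm t]
  exact mul_le_mul_of_nonneg_left (hle i) (sq_nonneg _)

theorem exp_sub_one_le_traceExpSubOne (hS : S.PosSemidef) {t : ℝ} {q : m → ℝ}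
    (hq : t * (q ⬝ᵥ q) < q ⬝ᵥ (S *ᵥ q)) : Real.exp t - 1 ≤ traceExpSubOne S := by
  obtain ⟨i, hi⟩ := exists_lt_eigenvalues hS.isHermitian hq
  rw [traceExpSubOne, exp_sub_one_eq_cfc hS.isHermitian, trace_cfc hS.isHermitian]
  calc Real.exp t - 1 ≤ Real.exp (hS.isHermitian.eigenvalues i) - 1 := by gcongr
    _ ≤ ∑ j, (Real.exp (hS.isHermitian.eigenvalues j) - 1) :=
      Finset.single_le_sum (f := fun j => Real.exp (hS.isHermitian.eigenvalues j) - 1)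
        (fun j _ => sub_nonneg.2 (Real.one_le_exp (hS.eigenvalues_nonneg j))) (Finset.mem_univ i)

theorem trace_mul_le_mul_trace {C M : Matrix m m ℝ} {W : ℝ} (hM : M.PosSemidef) (hC : C ≤ W • 1) :
    (M * C).trace ≤ W * M.trace := by
  obtain ⟨B, rfl⟩ := CStarAlgebra.nonneg_iff_eq_star_mul_self.1 hM.nonneg
  have hgap := ((le_iff.1 hC).mul_mul_conjTranspose_same B).trace_nonneg
  rw [mul_sub, sub_mul, trace_sub, mul_smul_comm, mul_one, smul_mul_assoc, trace_smul, smul_eq_mul,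
    trace_mul_comm B, trace_mul_cycle] at hgap
  rw [star_eq_conjTranspose]
  linarith

end MatrixExponential

section MatrixChernoff

open NormedSpace
open scoped MatrixOrder

variable {m : Type*}

/-- The scatter matrix `∑ⱼ v(xⱼ) v(xⱼ)ᵀ`, i.e. `n` times the empirical second-moment matrix. -/
def scatterMatrix (v : 𝒳 → m → ℝ) {n : ℕ} (X : Fin n → 𝒳) : Matrix m m ℝ :=
  ∑ j, vecMulVec (v (X j)) (v (X j))

theorem posSemidef_scatterMatrix [Finite m] (v : 𝒳 → m → ℝ) {n : ℕ} (X : Fin n → 𝒳) :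
    (scatterMatrix v X).PosSemidef :=
  posSemidef_sum _ fun j _ => posSemidef_vecMulVec_self_star (v (X j))

variable [Fintype m]

theorem dotProduct_scatterMatrix_mulVec (v : 𝒳 → m → ℝ) {n : ℕ} (X : Fin n → 𝒳) (q : m → ℝ) :
    q ⬝ᵥ (scatterMatrix v X *ᵥ q) = ∑ j, (v (X j) ⬝ᵥ q) ^ 2 := by
  rw [scatterMatrix, sum_mulVec, dotProduct_sum]
  refine Finset.sum_congr rfl fun j _ => ?_
  simp [vecMulVec_mulVec, dotProduct_comm q, sq]

-- Duality: a large form of the Gram matrix `v(xⱼ)ᵀ v(xₗ)` forces a large form of the scatter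
-- matrix, whose summands are independent.
theorem lt_dotProduct_scatterMatrix_mulVec (v : 𝒳 → m → ℝ) {n : ℕ} (X : Fin n → 𝒳) (z : Fin n → ℝ)
    {t : ℝ} (ht : 0 ≤ t) {q : m → ℝ} (hq : q = ∑ j, z j • v (X j))
    (hlt : t * (z ⬝ᵥ z) < q ⬝ᵥ q) : t * (q ⬝ᵥ q) < q ⬝ᵥ (scatterMatrix v X *ᵥ q) := by
  have hz_nonneg : 0 ≤ z ⬝ᵥ z := dotProduct_self_star_nonneg z
  have hq_pos : 0 < q ⬝ᵥ q := (mul_nonneg ht hz_nonneg).trans_lt hlt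
  have hcauchy : (q ⬝ᵥ q) ^ 2 ≤ (z ⬝ᵥ z) * (q ⬝ᵥ (scatterMatrix v X *ᵥ q)) := by
    have hself : q ⬝ᵥ q = ∑ j, z j * (v (X j) ⬝ᵥ q) := by
      conv_lhs => enter [1]; rw [hq]
      simp only [sum_dotProduct, smul_dotProduct, smul_eq_mul]
    rw [dotProduct_scatterMatrix_mulVec, hself, dotProduct]
    simpa only [sq] using Finset.sum_mul_sq_le_sq_mul_sq Finset.univ z fun j => v (X j) ⬝ᵥ q
  by_contra! hle
  nlinarith [mul_le_mul_of_nonneg_left hle hz_nonneg, mul_lt_mul_of_pos_right hlt hq_pos]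

variable [MeasurableSpace 𝒳] {μ : Measure 𝒳} {v : 𝒳 → m → ℝ}

/-- The second-moment matrix `𝔼 v vᵀ` of a random vector. -/
def secondMoment (μ : Measure 𝒳) (v : 𝒳 → m → ℝ) : Matrix m m ℝ :=
  of fun i j => ∫ x, v x i * v x j ∂μ

theorem integral_dotProduct_mulVec (hint : ∀ i j, Integrable (fun x => v x i * v x j) μ)
    (M : Matrix m m ℝ) :
    Integrable (fun x => v x ⬝ᵥ (M *ᵥ v x)) μ ∧
      ∫ x, v x ⬝ᵥ (M *ᵥ v x) ∂μ = (M * secondMoment μ v).trace := by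
  have hexpand (x : 𝒳) : v x ⬝ᵥ (M *ᵥ v x) = ∑ i, ∑ j, M i j * (v x j * v x i) := by
    simp only [dotProduct, mulVec, Finset.mul_sum]
    exact Finset.sum_congr rfl fun i _ => Finset.sum_congr rfl fun j _ => by ring
  simp only [hexpand]
  have hterm (i j : m) : Integrable (fun x => M i j * (v x j * v x i)) μ :=
    (hint j i).const_mul _
  have hrow (i : m) : Integrable (fun x => ∑ j, M i j * (v x j * v x i)) μ :=
    integrable_finsetSum _ fun j _ => hterm i j
  refine ⟨integrable_finsetSum _ fun i _ => hrow i, ?_⟩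
  rw [integral_finsetSum _ fun i _ => hrow i]
  simp only [integral_finsetSum _ fun j _ => hterm _ j, integral_const_mul, trace, diag, mul_apply,
    secondMoment, of_apply]

variable [IsProbabilityMeasure μ]

theorem integrable_mul_of_dotProduct_self_le (hv : AEMeasurable v μ)
    (hv_le : ∀ᵐ x ∂μ, v x ⬝ᵥ v x ≤ 1) (i j : m) : Integrable (fun x => v x i * v x j) μ := by
  have hmeas (i : m) : AEStronglyMeasurable (fun x => v x i) μ :=
    (aemeasurable_pi_iff.1 hv i).aestronglyMeasurable
  refine .of_bound ((hmeas i).mul (hmeas j)) 1 (hv_le.mono fun x hx => ?_)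
  have hcoord (i : m) : v x i ^ 2 ≤ 1 :=
    (Finset.single_le_sum (f := fun i => v x i * v x i) (fun i _ => mul_self_nonneg (v x i))
      (Finset.mem_univ i)).trans' (sq (v x i)).le |>.trans hx
  rw [Real.norm_eq_abs, abs_mul]
  exact mul_le_one₀ ((sq_le_one_iff_abs_le_one _).1 (hcoord i)) (abs_nonneg _)
    ((sq_le_one_iff_abs_le_one _).1 (hcoord j))

variable [DecidableEq m] {W T : ℝ}

theorem lintegral_traceExpSubOne_add_vecMulVec_le (hv : AEMeasurable v μ)
    (hv_le : ∀ᵐ x ∂μ, v x ⬝ᵥ v x ≤ 1) (hW : 0 < W) (hmoment : secondMoment μ v ≤ W • 1)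
    (htrace : (secondMoment μ v).trace ≤ T) {S : Matrix m m ℝ} (hS : S.PosSemidef) :
    ∫⁻ x, ENNReal.ofReal (traceExpSubOne (S + vecMulVec (v x) (v x)) + T / W) ∂μ ≤
      ENNReal.ofReal ((1 + (Real.exp 1 - 1) * W) * (traceExpSubOne S + T / W)) := by
  have hexp_one : 0 ≤ Real.exp 1 - 1 := sub_nonneg.2 (Real.one_le_exp zero_le_one)
  obtain ⟨hquad_int, hquad⟩ := integral_dotProduct_mulVec
    (integrable_mul_of_dotProduct_self_le hv hv_le) (exp S)
  have hmean : (exp S * secondMoment μ v).trace ≤ W * traceExpSubOne S + T := by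
    have hsplit : (exp S * secondMoment μ v).trace =
        ((exp S - 1) * secondMoment μ v).trace + (secondMoment μ v).trace := by
      rw [← trace_add, sub_mul, one_mul, sub_add_cancel]
    rw [hsplit]
    exact add_le_add (trace_mul_le_mul_trace (posSemidef_exp_sub_one hS) hmoment) htrace
  have hpointwise : ∀ᵐ x ∂μ, traceExpSubOne (S + vecMulVec (v x) (v x)) + T / W ≤
      traceExpSubOne S + T / W + (Real.exp 1 - 1) * (v x ⬝ᵥ (exp S *ᵥ v x)) := by
    filter_upwards [hv_le] with x hx
    have := trace_exp_add_vecMulVec_le hS hx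
    simp only [traceExpSubOne, trace_sub]
    linarith
  have hT : 0 ≤ T := htrace.trans'
    (Finset.sum_nonneg fun i _ => integral_nonneg fun x => mul_self_nonneg (v x i))
  have hbound_int : Integrable (fun x => traceExpSubOne S + T / W +
      (Real.exp 1 - 1) * (v x ⬝ᵥ (exp S *ᵥ v x))) μ :=
    (integrable_const _).add (hquad_int.const_mul _)
  have hbound_nonneg : ∀ᵐ x ∂μ, 0 ≤ traceExpSubOne S + T / W +
      (Real.exp 1 - 1) * (v x ⬝ᵥ (exp S *ᵥ v x)) := by
    filter_upwards [hpointwise] with x hx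
    exact hx.trans' (add_nonneg (traceExpSubOne_nonneg
      (hS.add (posSemidef_vecMulVec_self_star (v x)))) (div_nonneg hT hW.le))
  calc ∫⁻ x, ENNReal.ofReal (traceExpSubOne (S + vecMulVec (v x) (v x)) + T / W) ∂μ
      ≤ ∫⁻ x, ENNReal.ofReal (traceExpSubOne S + T / W +
          (Real.exp 1 - 1) * (v x ⬝ᵥ (exp S *ᵥ v x))) ∂μ :=
        lintegral_mono_ae (hpointwise.mono fun x hx => ENNReal.ofReal_le_ofReal hx)
    _ = ENNReal.ofReal (traceExpSubOne S + T / W +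
          (Real.exp 1 - 1) * (exp S * secondMoment μ v).trace) := by
        rw [← ofReal_integral_eq_lintegral_ofReal hbound_int hbound_nonneg,
          integral_add (integrable_const _) (hquad_int.const_mul _), integral_const_mul, hquad]
        simp
    _ ≤ ENNReal.ofReal (traceExpSubOne S + T / W +
          (Real.exp 1 - 1) * (W * traceExpSubOne S + T)) := by gcongr
    _ = ENNReal.ofReal ((1 + (Real.exp 1 - 1) * W) * (traceExpSubOne S + T / W)) := by
        congr 1
        field_simp

theorem aemeasurable_traceExpSubOne_scatterMatrix (hv : AEMeasurable v μ) (n : ℕ) :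
    AEMeasurable (fun X : Fin n → 𝒳 => traceExpSubOne (scatterMatrix v X))
      (Measure.pi fun _ => μ) := by
  have hcont : Continuous fun V : Fin n → m → ℝ =>
      traceExpSubOne (∑ j, vecMulVec (V j) (V j)) :=
    continuous_traceExpSubOne.comp (continuous_finsetSum _ fun j _ =>
      (continuous_apply j).matrix_vecMulVec (continuous_apply j))
  exact hcont.measurable.comp_aemeasurable (aemeasurable_pi_iff.2 fun j =>
    hv.comp_quasiMeasurePreserving (Measure.quasiMeasurePreserving_eval (fun _ => μ) j))

theorem lintegral_traceExpSubOne_scatterMatrix_le (hv : AEMeasurable v μ)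
    (hv_le : ∀ᵐ x ∂μ, v x ⬝ᵥ v x ≤ 1) (hW : 0 < W) (hmoment : secondMoment μ v ≤ W • 1)
    (htrace : (secondMoment μ v).trace ≤ T) (n : ℕ) :
    ∫⁻ X : Fin n → 𝒳, ENNReal.ofReal (traceExpSubOne (scatterMatrix v X) + T / W)
        ∂(Measure.pi fun _ => μ) ≤
      ENNReal.ofReal ((1 + (Real.exp 1 - 1) * W) ^ n * (T / W)) := by
  induction n with
  | zero => simp [scatterMatrix, traceExpSubOne_zero]
  | succ n ih =>
    have hsplit (X : Fin (n + 1) → 𝒳) : scatterMatrix v X =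
        scatterMatrix v (Fin.tail X) + vecMulVec (v (X 0)) (v (X 0)) := by
      rw [scatterMatrix, Fin.sum_univ_succ, add_comm]
      rfl
    have hgrowth : 0 ≤ 1 + (Real.exp 1 - 1) * W :=
      add_nonneg zero_le_one (mul_nonneg (sub_nonneg.2 (Real.one_le_exp zero_le_one)) hW.le)
    calc ∫⁻ X : Fin (n + 1) → 𝒳, ENNReal.ofReal (traceExpSubOne (scatterMatrix v X) + T / W)
          ∂(Measure.pi fun _ => μ)
        = ∫⁻ z : 𝒳 × (Fin n → 𝒳), ENNReal.ofReal (traceExpSubOne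
            (scatterMatrix v z.2 + vecMulVec (v z.1) (v z.1)) + T / W)
            ∂(μ.prod (Measure.pi fun _ => μ)) := by
          simp only [hsplit]
          exact (measurePreserving_piFinSuccAbove (fun _ : Fin (n + 1) => μ) 0).lintegral_comp_emb
            (MeasurableEquiv.measurableEmbedding _) fun z : 𝒳 × (Fin n → 𝒳) => ENNReal.ofReal
              (traceExpSubOne (scatterMatrix v z.2 + vecMulVec (v z.1) (v z.1)) + T / W)
      _ ≤ ∫⁻ X : Fin n → 𝒳, ∫⁻ x, ENNReal.ofReal (traceExpSubOne
            (scatterMatrix v X + vecMulVec (v x) (v x)) + T / W) ∂μ ∂(Measure.pi fun _ => μ) := by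
          rw [← lintegral_prod_swap]
          exact lintegral_prod_le _
      _ ≤ ∫⁻ X : Fin n → 𝒳, ENNReal.ofReal ((1 + (Real.exp 1 - 1) * W) *
            (traceExpSubOne (scatterMatrix v X) + T / W)) ∂(Measure.pi fun _ => μ) :=
          lintegral_mono fun X => lintegral_traceExpSubOne_add_vecMulVec_le hv hv_le hW hmoment
            htrace (posSemidef_scatterMatrix v X)
      _ = ENNReal.ofReal (1 + (Real.exp 1 - 1) * W) * ∫⁻ X : Fin n → 𝒳, ENNReal.ofReal
            (traceExpSubOne (scatterMatrix v X) + T / W) ∂(Measure.pi fun _ => μ) := by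
          simp only [ENNReal.ofReal_mul hgrowth]
          exact lintegral_const_mul'' _
            ((aemeasurable_traceExpSubOne_scatterMatrix hv n).add_const _).ennreal_ofReal
      _ ≤ ENNReal.ofReal ((1 + (Real.exp 1 - 1) * W) ^ (n + 1) * (T / W)) := by
          rw [pow_succ', mul_assoc, ENNReal.ofReal_mul hgrowth]
          gcongr

theorem measure_exists_lt_dotProduct_sum_smul_le (hv : AEMeasurable v μ)
    (hv_le : ∀ᵐ x ∂μ, v x ⬝ᵥ v x ≤ 1) (hW : 0 < W) (hmoment : secondMoment μ v ≤ W • 1)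
    (htrace : (secondMoment μ v).trace ≤ T) (hWT : W ≤ T) (n : ℕ) {t : ℝ} (ht : 0 ≤ t) :
    (Measure.pi fun _ => μ) {X : Fin n → 𝒳 | ∃ z : Fin n → ℝ,
      t * (z ⬝ᵥ z) < (∑ j, z j • v (X j)) ⬝ᵥ ∑ j, z j • v (X j)} ≤
      ENNReal.ofReal (T / W * Real.exp ((Real.exp 1 - 1) * W * n - t)) := by
  have hone : 1 ≤ T / W := (one_le_div hW).2 hWT
  have hgrowth : (1 + (Real.exp 1 - 1) * W) ^ n ≤ Real.exp ((Real.exp 1 - 1) * W * n) := by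
    rw [mul_comm _ (n : ℝ), Real.exp_nat_mul, add_comm]
    have hexp_one : 0 ≤ Real.exp 1 - 1 := sub_nonneg.2 (Real.one_le_exp zero_le_one)
    exact pow_le_pow_left₀ (by positivity) (Real.add_one_le_exp _) n
  set bad : Set (Fin n → 𝒳) := {X | ∃ z : Fin n → ℝ,
    t * (z ⬝ᵥ z) < (∑ j, z j • v (X j)) ⬝ᵥ ∑ j, z j • v (X j)}
  have hbad : bad ⊆ {X | ENNReal.ofReal (Real.exp t) ≤
      ENNReal.ofReal (traceExpSubOne (scatterMatrix v X) + T / W)} := fun X ⟨z, hz⟩ => by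
    have hexp := exp_sub_one_le_traceExpSubOne (posSemidef_scatterMatrix v X)
      (lt_dotProduct_scatterMatrix_mulVec v X z ht rfl hz)
    exact ENNReal.ofReal_le_ofReal (by linarith)
  have hmarkov : ENNReal.ofReal (Real.exp t) * (Measure.pi fun _ => μ) bad ≤
      ENNReal.ofReal (T / W * Real.exp ((Real.exp 1 - 1) * W * n)) :=
    calc ENNReal.ofReal (Real.exp t) * (Measure.pi fun _ => μ) bad
        ≤ ∫⁻ X : Fin n → 𝒳, ENNReal.ofReal (traceExpSubOne (scatterMatrix v X) + T / W)
            ∂(Measure.pi fun _ => μ) :=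
          (mul_le_mul_right (measure_mono hbad) _).trans (mul_meas_ge_le_lintegral₀
            ((aemeasurable_traceExpSubOne_scatterMatrix hv n).add_const _).ennreal_ofReal _)
      _ ≤ ENNReal.ofReal ((1 + (Real.exp 1 - 1) * W) ^ n * (T / W)) :=
          lintegral_traceExpSubOne_scatterMatrix_le hv hv_le hW hmoment htrace n
      _ ≤ ENNReal.ofReal (T / W * Real.exp ((Real.exp 1 - 1) * W * n)) := by
          rw [mul_comm (T / W)]
          gcongr
  rwa [Real.exp_sub, ← mul_div_assoc, ENNReal.ofReal_div_of_pos (Real.exp_pos t),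
    ENNReal.le_div_iff_mul_le (Or.inl (by simpa using Real.exp_pos t))
      (Or.inl ENNReal.ofReal_ne_top), mul_comm]

end MatrixChernoff

section OrthonormalChernoff

open scoped MatrixOrder

/-- The random vector `(√wᵢ φᵢ(x))_{i ∈ s}`, whose scatter matrix has the same nonzero eigenvalues
as the kernel matrix `∑_{i ∈ s} wᵢ φᵢ(xⱼ) φᵢ(xₗ)`. -/
def weightedFeatures (s : Finset ℕ) (w : ℕ → ℝ) (φ : ℕ → 𝒳 → ℝ) (x : 𝒳) : s → ℝ :=
  fun i => √(w i) * φ i x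

theorem weightedFeatures_dotProduct_self {s : Finset ℕ} {w : ℕ → ℝ} (hw : ∀ i ∈ s, 0 ≤ w i)
    (φ : ℕ → 𝒳 → ℝ) (x : 𝒳) :
    weightedFeatures s w φ x ⬝ᵥ weightedFeatures s w φ x = ∑ i ∈ s, w i * φ i x ^ 2 := by
  rw [dotProduct, ← Finset.sum_coe_sort s fun i => w i * φ i x ^ 2]
  refine Finset.sum_congr rfl fun i _ => ?_
  rw [weightedFeatures, ← sq, mul_pow, Real.sq_sqrt (hw i i.2)]

theorem sum_smul_weightedFeatures (s : Finset ℕ) (w : ℕ → ℝ) (φ : ℕ → 𝒳 → ℝ) {n : ℕ}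
    (X : Fin n → 𝒳) (z : Fin n → ℝ) :
    ∑ j, z j • weightedFeatures s w φ (X j) =
      weightedFeatures s w (fun i z => ∑ j, z j * φ i (X j)) z := by
  ext i
  simp only [Finset.sum_apply, Pi.smul_apply, smul_eq_mul, weightedFeatures, Finset.mul_sum,
    mul_left_comm]

variable [MeasurableSpace 𝒳] {μ : Measure 𝒳} {φ : ℕ → 𝒳 → ℝ}

theorem aemeasurable_weightedFeatures (hφ : OrthonormalFamily μ φ) (s : Finset ℕ) (w : ℕ → ℝ) :
    AEMeasurable (weightedFeatures s w φ) μ :=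
  aemeasurable_pi_iff.2 fun i => (hφ.1 i).1.aemeasurable.const_mul _

theorem secondMoment_weightedFeatures (hφ : OrthonormalFamily μ φ) {s : Finset ℕ} {w : ℕ → ℝ}
    (hw : ∀ i ∈ s, 0 ≤ w i) :
    secondMoment μ (weightedFeatures s w φ) = diagonal fun i : s => w i := by
  ext i j
  simp only [secondMoment, weightedFeatures, of_apply, mul_mul_mul_comm _ (φ _ _),
    integral_const_mul, hφ.2, diagonal_apply, Subtype.ext_iff]
  split_ifs with hij
  · rw [mul_one, hij, Real.mul_self_sqrt (hw j j.2)]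
  · rw [mul_zero]

variable [IsProbabilityMeasure μ] {w : ℕ → ℝ} {W T R : ℝ}

theorem measure_exists_lt_sum_mul_sq_le (hφ : OrthonormalFamily μ φ) {s : Finset ℕ}
    (hw : ∀ i ∈ s, 0 ≤ w i) (hwW : ∀ i ∈ s, w i ≤ W) (hW : 0 < W) (hwT : ∑ i ∈ s, w i ≤ T)
    (hWT : W ≤ T) (hR : 0 < R) (hwR : ∀ᵐ x ∂μ, ∑ i ∈ s, w i * φ i x ^ 2 ≤ R) (n : ℕ) {t : ℝ}
    (ht : 0 ≤ t) :
    (Measure.pi fun _ => μ) {X : Fin n → 𝒳 | ∃ z : Fin n → ℝ,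
      t * (z ⬝ᵥ z) < ∑ i ∈ s, w i * (∑ j, z j * φ i (X j)) ^ 2} ≤
      ENNReal.ofReal (T / W * Real.exp (((Real.exp 1 - 1) * W * n - t) / R)) := by
  have hdiv_nonneg (i) (hi : i ∈ s) : 0 ≤ w i / R := div_nonneg (hw i hi) hR.le
  have hsum_div (f : ℕ → ℝ) : ∑ i ∈ s, w i / R * f i = (∑ i ∈ s, w i * f i) / R := by
    simp only [Finset.sum_div, div_mul_eq_mul_div]
  have hmoment := secondMoment_weightedFeatures hφ hdiv_nonneg
  have hv_le : ∀ᵐ x ∂μ, weightedFeatures s (fun i => w i / R) φ x ⬝ᵥ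
      weightedFeatures s (fun i => w i / R) φ x ≤ 1 := by
    filter_upwards [hwR] with x hx
    rwa [weightedFeatures_dotProduct_self hdiv_nonneg, hsum_div, div_le_one hR]
  have hop : secondMoment μ (weightedFeatures s (fun i => w i / R) φ) ≤ (W / R) • 1 := by
    rw [hmoment, Matrix.le_iff, smul_one_eq_diagonal, diagonal_sub, posSemidef_diagonal_iff]
    exact fun i => sub_nonneg.2 (div_le_div_of_nonneg_right (hwW i i.2) hR.le)
  have htrace : (secondMoment μ (weightedFeatures s (fun i => w i / R) φ)).trace ≤ T / R := by
    rw [hmoment, trace_diagonal, Finset.sum_coe_sort s fun i => w i / R, ← Finset.sum_div]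
    exact div_le_div_of_nonneg_right hwT hR.le
  have hexponent : (Real.exp 1 - 1) * (W / R) * n - t / R =
      ((Real.exp 1 - 1) * W * n - t) / R := by ring
  have hchernoff := measure_exists_lt_dotProduct_sum_smul_le
    (aemeasurable_weightedFeatures hφ s _) hv_le (div_pos hW hR) hop htrace
    (div_le_div_of_nonneg_right hWT hR.le) n (div_nonneg ht hR.le)
  simpa only [sum_smul_weightedFeatures, weightedFeatures_dotProduct_self hdiv_nonneg, hsum_div,
    div_mul_eq_mul_div t, div_lt_div_iff_of_pos_right hR, div_div_div_cancel_right₀ hR.ne',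
    hexponent] using hchernoff

theorem measure_exists_lt_tsum_mul_sq_le (hφ : OrthonormalFamily μ φ) (hw : ∀ i, 0 ≤ w i)
    (hwW : ∀ i, w i ≤ W) (hW : 0 < W) (hwT : ∀ N, ∑ i ∈ Finset.range N, w i ≤ T)
    (hWT : W ≤ T) (hR : 0 < R)
    (hwR : ∀ᵐ x ∂μ, ∀ N, ∑ i ∈ Finset.range N, w i * φ i x ^ 2 ≤ R) (n : ℕ) {t : ℝ}
    (ht : 0 ≤ t) :
    (Measure.pi fun _ => μ) {X : Fin n → 𝒳 | ∃ z : Fin n → ℝ,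
      t * (z ⬝ᵥ z) < ∑' i, w i * (∑ j, z j * φ i (X j)) ^ 2} ≤
      ENNReal.ofReal (T / W * Real.exp (((Real.exp 1 - 1) * W * n - t) / R)) := by
  set partialBad : ℕ → Set (Fin n → 𝒳) := fun N => {X | ∃ z : Fin n → ℝ,
    t * (z ⬝ᵥ z) < ∑ i ∈ Finset.range N, w i * (∑ j, z j * φ i (X j)) ^ 2}
  have hmono : Monotone partialBad := fun N M hNM X ⟨z, hz⟩ =>
    ⟨z, hz.trans_le <| Finset.sum_le_sum_of_subset_of_nonneg (Finset.range_subset_range.2 hNM)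
      fun i _ _ => mul_nonneg (hw i) (sq_nonneg _)⟩
  have hsub : {X : Fin n → 𝒳 | ∃ z : Fin n → ℝ,
      t * (z ⬝ᵥ z) < ∑' i, w i * (∑ j, z j * φ i (X j)) ^ 2} ⊆ ⋃ N, partialBad N := by
    rintro X ⟨z, hz⟩
    have hsummable : Summable fun i => w i * (∑ j, z j * φ i (X j)) ^ 2 := by
      by_contra hns
      rw [tsum_eq_zero_of_not_summable hns] at hz
      exact hz.not_ge (mul_nonneg ht (dotProduct_self_star_nonneg z))
    obtain ⟨N, hN⟩ := (hsummable.hasSum.tendsto_sum_nat.eventually_const_lt hz).exists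
    exact Set.mem_iUnion.2 ⟨N, z, hN⟩
  refine (measure_mono hsub).trans ?_
  rw [hmono.measure_iUnion]
  exact iSup_le fun N => measure_exists_lt_sum_mul_sq_le hφ (fun i _ => hw i) (fun i _ => hwW i) hW
    (hwT N) hWT hR (hwR.mono fun x hx => hx N) n ht

end OrthonormalChernoff

section Concentration

variable [MeasurableSpace 𝒳] {μ : Measure 𝒳} {lam : ℕ → ℝ} {ψ : ℕ → 𝒳 → ℝ}

theorem OrthonormalFamily.integral_sq (hψ : OrthonormalFamily μ ψ) (i : ℕ) :
    ∫ x, ψ i x ^ 2 ∂μ = 1 := by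
  simpa only [sq, if_true] using hψ.2 i i

theorem OrthonormalFamily.shift (hψ : OrthonormalFamily μ ψ) (k : ℕ) :
    OrthonormalFamily μ fun i => ψ (k + i) :=
  ⟨fun i => hψ.1 (k + i), fun i j => by simp only [hψ.2, Nat.add_left_cancel_iff]⟩

theorem OrthonormalFamily.ae_summable_mul_sq (hψ : OrthonormalFamily μ ψ)
    (hlam : ∀ i, 0 ≤ lam i) (hsum : Summable lam) :
    ∀ᵐ x ∂μ, Summable fun i => lam i * ψ i x ^ 2 := by
  have hmeas (i : ℕ) : AEMeasurable (fun x => ENNReal.ofReal (lam i * ψ i x ^ 2)) μ :=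
    (((hψ.1 i).1.aemeasurable.pow_const 2).const_mul _).ennreal_ofReal
  have hval (i : ℕ) : ∫⁻ x, ENNReal.ofReal (lam i * ψ i x ^ 2) ∂μ = ENNReal.ofReal (lam i) := by
    rw [← ofReal_integral_eq_lintegral_ofReal ((hψ.1 i).integrable_sq.const_mul _)
      (.of_forall fun x => mul_nonneg (hlam i) (sq_nonneg _)), integral_const_mul,
      hψ.integral_sq, mul_one]
  have hfinite : ∫⁻ x, ∑' i, ENNReal.ofReal (lam i * ψ i x ^ 2) ∂μ ≠ ⊤ := by
    simpa only [lintegral_tsum hmeas, hval] using hsum.tsum_ofReal_ne_top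
  filter_upwards [ae_lt_top' (.tsum hmeas) hfinite] with x hx
  refine (ENNReal.summable_toReal hx.ne).congr fun i => ?_
  rw [ENNReal.toReal_ofReal (mul_nonneg (hlam i) (sq_nonneg _))]

theorem summable_tail (hsum : Summable lam) (k : ℕ) : Summable fun i => lam (k + i) :=
  hsum.comp_injective (add_right_injective k)

theorem le_opTail (hsum : Summable lam) (k i : ℕ) : lam (k + i) ≤ opTail lam k :=
  le_ciSup (f := fun i => lam (k + i))
    (summable_tail hsum k).tendsto_atTop_zero.bddAbove_range i

theorem opTail_le_trTail (hlam : ∀ i, 0 ≤ lam i) (hsum : Summable lam) (k : ℕ) :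
    opTail lam k ≤ trTail lam k :=
  ciSup_le fun i => (summable_tail hsum k).le_tsum i fun j _ => hlam (k + j)

variable {k : ℕ}

theorem BetaFinite.ae_le_betaQ (hβ : BetaFinite μ lam ψ k) :
    ∀ᵐ x ∂μ, betaF lam ψ k x ≤ betaQ μ lam ψ k :=
  let ⟨C, hC⟩ := hβ
  ae_le_essSup ⟨C, hC⟩

theorem BetaFinite.ae_sum_range_sq_le (hβ : BetaFinite μ lam ψ k) (hk : 1 ≤ k) :
    ∀ᵐ x ∂μ, ∑ i ∈ Finset.range k, ψ i x ^ 2 ≤ betaQ μ lam ψ k * k := by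
  filter_upwards [hβ.ae_le_betaQ] with x hx
  exact (div_le_iff₀ (Nat.cast_pos.2 hk)).1 ((max_le_iff.1 (max_le_iff.1 hx).1).1)

theorem BetaFinite.ae_tsum_mul_sq_le (hβ : BetaFinite μ lam ψ k) (htr : 0 < trTail lam k) :
    ∀ᵐ x ∂μ, ∑' i, lam (k + i) * ψ (k + i) x ^ 2 ≤ betaQ μ lam ψ k * trTail lam k := by
  filter_upwards [hβ.ae_le_betaQ] with x hx
  exact (div_le_iff₀ htr).1 ((max_le_iff.1 (max_le_iff.1 hx).1).2)

variable [IsProbabilityMeasure μ]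

theorem one_le_betaQ (hψ : OrthonormalFamily μ ψ) (hβ : BetaFinite μ lam ψ k) (hk : 1 ≤ k) :
    1 ≤ betaQ μ lam ψ k := by
  have hint (i) (_ : i ∈ Finset.range k) : Integrable (fun x => ψ i x ^ 2) μ :=
    (hψ.1 i).integrable_sq
  have hmean : (k : ℝ) ≤ betaQ μ lam ψ k * k := by
    simpa [integral_finsetSum _ hint, hψ.integral_sq] using
      integral_mono_ae (integrable_finsetSum _ hint) (integrable_const _)
        (hβ.ae_sum_range_sq_le hk)
  exact le_of_mul_le_mul_right (by rwa [one_mul]) (Nat.cast_pos.2 hk)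

theorem exp_one_sub_one_mul_div_le {a β : ℝ} (ha : 0 ≤ a) (hβ : 1 ≤ β) :
    (Real.exp 1 - 1) * a / β ≤ 2 * a := by
  have hexp : 0 ≤ Real.exp 1 - 1 := sub_nonneg.2 (Real.one_le_exp zero_le_one)
  exact (div_le_self (mul_nonneg hexp ha) hβ).trans
    (mul_le_mul_of_nonneg_right (by linarith [Real.exp_one_lt_three]) ha)

theorem measure_exists_lt_sum_range_sq_le (hψ : OrthonormalFamily μ ψ)
    (hβ : BetaFinite μ lam ψ k) (hk : 1 ≤ k) (n : ℕ) :
    (Measure.pi fun _ => μ) {X : Fin n → 𝒳 | ∃ z : Fin n → ℝ,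
      6 * betaQ μ lam ψ k * (n + k * Real.log k) * (z ⬝ᵥ z) <
        ∑ i ∈ Finset.range k, (∑ j, z j * ψ i (X j)) ^ 2} ≤
      ENNReal.ofReal (Real.exp (-max ((n : ℝ) / k) (Real.log k))) := by
  have hβ_one := one_le_betaQ hψ hβ hk
  have hk_one : (1 : ℝ) ≤ k := Nat.one_le_cast.2 hk
  have hk_pos : (0 : ℝ) < k := zero_lt_one.trans_le hk_one
  have hlog := Real.log_nonneg hk_one
  have hbound := hβ.ae_sum_range_sq_le hk
  set β := betaQ μ lam ψ k
  have hchernoff := measure_exists_lt_sum_mul_sq_le hψ (s := Finset.range k) (w := fun _ => 1)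
    (fun _ _ => zero_le_one) (fun _ _ => le_rfl) one_pos (T := k) (by simp) hk_one
    (R := β * k) (by positivity) (by simpa only [one_mul] using hbound) n
    (t := 6 * β * (n + k * Real.log k)) (by positivity)
  simp only [one_mul, mul_one, div_one] at hchernoff
  refine hchernoff.trans (ENNReal.ofReal_le_ofReal ?_)
  have hexponent : ((Real.exp 1 - 1) * n - 6 * β * (n + k * Real.log k)) / (β * k) =
      (Real.exp 1 - 1) * (n / k) / β - 6 * (n / k + Real.log k) := by
    field_simp
  have hdrift := exp_one_sub_one_mul_div_le (a := (n : ℝ) / k) (by positivity) hβ_one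
  have hmax : max ((n : ℝ) / k) (Real.log k) ≤ n / k + Real.log k :=
    max_le_add_of_nonneg (by positivity) hlog
  have hratio_nonneg : 0 ≤ (n : ℝ) / k := by positivity
  calc (k : ℝ) * Real.exp (((Real.exp 1 - 1) * n - 6 * β * (n + k * Real.log k)) / (β * k))
      = Real.exp (Real.log k + ((Real.exp 1 - 1) * (n / k) / β - 6 * (n / k + Real.log k))) := by
        rw [hexponent, Real.exp_add, Real.exp_log hk_pos]
    _ ≤ Real.exp (-max ((n : ℝ) / k) (Real.log k)) := Real.exp_le_exp.2 (by linarith)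

theorem measure_exists_lt_tsum_tail_mul_sq_le_of_opTail_pos (hψ : OrthonormalFamily μ ψ)
    (hlam : ∀ i, 0 ≤ lam i) (hsum : Summable lam) (hβ : BetaFinite μ lam ψ k) (hk : 1 ≤ k)
    (hop : 0 < opTail lam k) (n : ℕ) :
    (Measure.pi fun _ => μ) {X : Fin n → 𝒳 | ∃ z : Fin n → ℝ,
      6 * betaQ μ lam ψ k * (n * opTail lam k + Real.log (k + 1) * trTail lam k) * (z ⬝ᵥ z) <
        ∑' i, lam (k + i) * (∑ j, z j * ψ (k + i) (X j)) ^ 2} ≤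
      ENNReal.ofReal (rEff lam k / k ^ 4 * Real.exp (-(n / rEff lam k))) := by
  have hop_le := opTail_le_trTail hlam hsum k
  have htr : 0 < trTail lam k := hop.trans_le hop_le
  have hβ_one := one_le_betaQ hψ hβ hk
  have hk_pos : (0 : ℝ) < k := Nat.cast_pos.2 hk
  have hlog : 0 ≤ Real.log (k + 1) := Real.log_nonneg (by linarith)
  have hlog_le : Real.log k ≤ Real.log (k + 1) := Real.log_le_log hk_pos (by linarith)
  have hpartial : ∀ᵐ x ∂μ, ∀ N, ∑ i ∈ Finset.range N, lam (k + i) * ψ (k + i) x ^ 2 ≤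
      betaQ μ lam ψ k * trTail lam k := by
    filter_upwards [hβ.ae_tsum_mul_sq_le htr, (hψ.shift k).ae_summable_mul_sq
      (fun i => hlam (k + i)) (summable_tail hsum k)] with x hx hsummable N
    exact (hsummable.sum_le_tsum _ fun i _ => mul_nonneg (hlam _) (sq_nonneg _)).trans hx
  set β := betaQ μ lam ψ k
  set r := rEff lam k with hr
  have hr_pos : 0 < r := div_pos htr hop
  refine (measure_exists_lt_tsum_mul_sq_le (hψ.shift k) (fun i => hlam (k + i)) (le_opTail hsum k)
    hop (fun N => (summable_tail hsum k).sum_le_tsum _ fun i _ => hlam _) hop_le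
    (by positivity) hpartial n (by positivity)).trans (ENNReal.ofReal_le_ofReal ?_)
  have hexponent : ((Real.exp 1 - 1) * opTail lam k * n -
      6 * β * (n * opTail lam k + Real.log (k + 1) * trTail lam k)) / (β * trTail lam k) =
      (Real.exp 1 - 1) * (n / r) / β - 6 * (n / r + Real.log (k + 1)) := by
    rw [hr, rEff]
    field_simp
  have hdrift := exp_one_sub_one_mul_div_le (a := n / r) (by positivity) hβ_one
  have hratio_nonneg : 0 ≤ n / r := by positivity
  calc r * Real.exp _ ≤ r * Real.exp (-(n / r) - 4 * Real.log k) := by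
        rw [hexponent]
        refine mul_le_mul_of_nonneg_left (Real.exp_le_exp.2 ?_) hr_pos.le
        linarith [Real.log_natCast_nonneg k]
    _ = r / k ^ 4 * Real.exp (-(n / r)) := by
        rw [Real.exp_sub, ← Real.log_rpow hk_pos, Real.exp_log (by positivity)]
        norm_cast
        ring

theorem measure_exists_lt_tsum_tail_mul_sq_le (hψ : OrthonormalFamily μ ψ)
    (hlam : ∀ i, 0 ≤ lam i) (hsum : Summable lam) (hβ : BetaFinite μ lam ψ k) (hk : 1 ≤ k)
    (n : ℕ) :
    (Measure.pi fun _ => μ) {X : Fin n → 𝒳 | ∃ z : Fin n → ℝ,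
      6 * betaQ μ lam ψ k * (n * opTail lam k + Real.log (k + 1) * trTail lam k) * (z ⬝ᵥ z) <
        ∑' i, lam (k + i) * (∑ j, z j * ψ (k + i) (X j)) ^ 2} ≤
      ENNReal.ofReal (rEff lam k / k ^ 4 * Real.exp (-(n / rEff lam k))) := by
  have hop_nonneg : 0 ≤ opTail lam k := (hlam k).trans (le_opTail hsum k 0)
  rcases hop_nonneg.lt_or_eq with hop | hop
  · exact measure_exists_lt_tsum_tail_mul_sq_le_of_opTail_pos hψ hlam hsum hβ hk hop n
  · have hzero (i : ℕ) : lam (k + i) = 0 :=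
      ((le_opTail hsum k i).trans hop.ge).antisymm (hlam (k + i))
    simp [trTail, hzero, ← hop]

end Concentration

section EigenvalueCounting

theorem card_lt_eigenvalues_le_finrank {m : Type*} [Fintype m] [DecidableEq m] {A : Matrix m m ℝ}
    (hA : A.IsHermitian) {E : Type*} [AddCommGroup E] [Module ℝ E] [FiniteDimensional ℝ E]
    (L : (m → ℝ) →ₗ[ℝ] E) {B : ℝ} (hB : ∀ z, L z = 0 → z ⬝ᵥ (A *ᵥ z) ≤ B * (z ⬝ᵥ z)) :
    Fintype.card {i // B < hA.eigenvalues i} ≤ Module.finrank ℝ E := by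
  by_contra! hlt
  let coord : (m → ℝ) →ₗ[ℝ] m → ℝ := (hA.eigenvectorUnitary : Matrix m m ℝ)ᵀ.mulVecLin
  let smallCoord : (m → ℝ) →ₗ[ℝ] {i // ¬B < hA.eigenvalues i} → ℝ :=
    LinearMap.funLeft ℝ ℝ Subtype.val ∘ₗ coord
  have hker : LinearMap.ker (L.prod smallCoord) ≠ ⊥ := by
    apply LinearMap.ker_ne_bot_of_finrank_lt
    rw [Module.finrank_prod, Module.finrank_fintype_fun_eq_card,
      Module.finrank_fintype_fun_eq_card, Fintype.card_subtype_compl]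
    have := Fintype.card_subtype_le fun i => B < hA.eigenvalues i
    omega
  obtain ⟨z, hz, hz_ne⟩ := Submodule.exists_mem_ne_zero_of_ne_bot hker
  obtain ⟨hLz, hsmall⟩ := Prod.mk_eq_zero.1 hz
  have hcoord_ne : ∃ i, coord z i ≠ 0 := by
    by_contra! hzero
    refine hz_ne (dotProduct_self_eq_zero.1 ?_)
    rw [dotProduct_self_eq_sum_eigenvectorUnitary hA]
    exact Finset.sum_eq_zero fun i _ => by rw [sq_eq_zero_iff]; exact hzero i
  obtain ⟨i₀, hi₀⟩ := hcoord_ne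
  have hlarge (i : m) (hi : coord z i ≠ 0) : B < hA.eigenvalues i := by
    by_contra hle
    exact hi (congrFun hsmall ⟨i, hle⟩)
  refine (hB z hLz).not_gt ?_
  rw [dotProduct_mulVec_eq_sum_eigenvalues hA, dotProduct_self_eq_sum_eigenvectorUnitary hA,
    Finset.mul_sum]
  refine Finset.sum_lt_sum (fun i _ => ?_) ⟨i₀, Finset.mem_univ _, ?_⟩
  · rw [mul_comm B]
    rcases eq_or_ne (coord z i) 0 with hi | hi
    · simp only [coord, mulVecLin_apply] at hi
      simp [hi]
    · exact mul_le_mul_of_nonneg_left (hlarge i hi).le (sq_nonneg _)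
  · rw [mul_comm B]
    exact mul_lt_mul_of_pos_left (hlarge i₀ hi₀) (sq_pos_iff.2 hi₀)

theorem eigval_le {n k : ℕ} (hk : 1 ≤ k) (hkn : k ≤ n) {M : Matrix (Fin n) (Fin n) ℝ}
    (hM : M.IsHermitian) {E : Type*} [AddCommGroup E] [Module ℝ E] [FiniteDimensional ℝ E]
    (L : (Fin n → ℝ) →ₗ[ℝ] E) (hL : Module.finrank ℝ E < k) {B : ℝ}
    (hB : ∀ z, L z = 0 → z ⬝ᵥ (M *ᵥ z) ≤ B * (z ⬝ᵥ z)) : eigval M k ≤ B := by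
  have hj : k - 1 < n := by omega
  rw [eigval, dif_pos hM, dif_pos hj]
  by_contra! hlt
  have hcard := (Fintype.card_subtype fun i => B < hM.eigenvalues i).symm.trans_le
    (card_lt_eigenvalues_le_finrank hM L hB)
  have hsub : (Finset.Ici (Fin.rev ⟨k - 1, hj⟩)).map (Tuple.sort hM.eigenvalues).toEmbedding ⊆
      Finset.univ.filter fun i => B < hM.eigenvalues i := by
    intro i hi
    obtain ⟨j, hj, rfl⟩ := Finset.mem_map.1 hi
    exact Finset.mem_filter.2 ⟨Finset.mem_univ _,
      hlt.trans_le (Tuple.monotone_sort _ (Finset.mem_Ici.1 hj))⟩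
  have hcard_ge := Finset.card_le_card hsub
  rw [Finset.card_map, Fin.card_Ici, Fin.val_rev] at hcard_ge
  simp only at hcard_ge
  omega

end EigenvalueCounting

section KernelMatrix

variable {lam : ℕ → ℝ} {ψ : ℕ → 𝒳 → ℝ} {n k : ℕ} {X : Fin n → 𝒳}

theorem isHermitian_kerMat (lam : ℕ → ℝ) (ψ : ℕ → 𝒳 → ℝ) (X : Fin n → 𝒳) :
    (kerMat lam ψ X).IsHermitian := by
  ext j l
  simp only [conjTranspose_apply, kerMat, of_apply, star_trivial]
  exact tsum_congr fun i => mul_right_comm _ _ _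

theorem summable_mul_mul (hlam : ∀ i, 0 ≤ lam i) {x y : 𝒳}
    (hx : Summable fun i => lam i * ψ i x ^ 2) (hy : Summable fun i => lam i * ψ i y ^ 2) :
    Summable fun i => lam i * ψ i x * ψ i y := by
  refine Summable.of_norm_bounded (hx.add hy) fun i => ?_
  rw [Real.norm_eq_abs, mul_assoc, abs_mul, abs_of_nonneg (hlam i), ← mul_add]
  refine mul_le_mul_of_nonneg_left ?_ (hlam i)
  rw [abs_mul, ← sq_abs (ψ i x), ← sq_abs (ψ i y)]
  nlinarith [two_mul_le_add_sq |ψ i x| |ψ i y|, sq_nonneg |ψ i x|, sq_nonneg |ψ i y|]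

theorem hasSum_dotProduct_kerMat_mulVec (hlam : ∀ i, 0 ≤ lam i)
    (hX : ∀ j, Summable fun i => lam i * ψ i (X j) ^ 2) (z : Fin n → ℝ) :
    HasSum (fun i => lam i * (∑ j, z j * ψ i (X j)) ^ 2) (z ⬝ᵥ (kerMat lam ψ X *ᵥ z)) := by
  have hexpand (i : ℕ) : lam i * (∑ j, z j * ψ i (X j)) ^ 2 =
      ∑ j, ∑ l, z j * (lam i * ψ i (X j) * ψ i (X l) * z l) := by
    rw [sq, Finset.sum_mul_sum, Finset.mul_sum]
    refine Finset.sum_congr rfl fun j _ => ?_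
    rw [Finset.mul_sum]
    exact Finset.sum_congr rfl fun l _ => by ring
  simp only [hexpand, dotProduct, mulVec, Finset.mul_sum]
  exact hasSum_sum fun j _ => hasSum_sum fun l _ =>
    ((summable_mul_mul hlam (hX j) (hX l)).hasSum.mul_right (z l)).mul_left (z j)

theorem eigval_inv_smul_kerMat_le (hlam : ∀ i, 0 ≤ lam i) (hk : 1 ≤ k) (hkn : k ≤ n)
    (hX : ∀ j, Summable fun i => lam i * ψ i (X j) ^ 2) {a b : ℝ}
    (hhead : ∀ z : Fin n → ℝ,
      ∑ i ∈ Finset.range k, (∑ j, z j * ψ i (X j)) ^ 2 ≤ a * (z ⬝ᵥ z))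
    (htail : ∀ z : Fin n → ℝ,
      ∑' i, lam (k + i) * (∑ j, z j * ψ (k + i) (X j)) ^ 2 ≤ b * (z ⬝ᵥ z)) :
    eigval ((n : ℝ)⁻¹ • kerMat lam ψ X) k ≤ (n : ℝ)⁻¹ * (lam (k - 1) * a + b) := by
  refine eigval_le hk hkn ((isHermitian_kerMat lam ψ X).smul (.all _))
    (psiMat ψ (k - 1) X)ᵀ.mulVecLin (by rw [Module.finrank_fin_fun]; omega) fun z hz => ?_
  have hquad := hasSum_dotProduct_kerMat_mulVec hlam hX z
  have horth (i : ℕ) (hi : i < k - 1) : ∑ j, z j * ψ i (X j) = 0 := by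
    simpa only [mulVecLin_apply, mulVec, dotProduct, transpose_apply, psiMat, of_apply,
      Pi.zero_apply, mul_comm (z _)] using congrFun hz ⟨i, hi⟩
  have hlast : ∑ i ∈ Finset.range k, lam i * (∑ j, z j * ψ i (X j)) ^ 2 =
      lam (k - 1) * ∑ i ∈ Finset.range k, (∑ j, z j * ψ i (X j)) ^ 2 := by
    rw [Finset.mul_sum]
    refine Finset.sum_congr rfl fun i hi => ?_
    rcases (Nat.le_sub_one_of_lt (Finset.mem_range.1 hi)).eq_or_lt with rfl | hlt
    · rfl
    · simp [horth i hlt]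
  have hsplit : z ⬝ᵥ (kerMat lam ψ X *ᵥ z) ≤ (lam (k - 1) * a + b) * (z ⬝ᵥ z) := by
    rw [← hquad.tsum_eq, ← hquad.summable.sum_add_tsum_nat_add k, hlast, add_mul, mul_assoc]
    simp only [add_comm _ k]
    exact add_le_add (mul_le_mul_of_nonneg_left (hhead z) (hlam _)) (htail z)
  rw [smul_mulVec, dotProduct_smul, smul_eq_mul, mul_assoc]
  exact mul_le_mul_of_nonneg_left hsplit (by positivity)

theorem eigval_inv_smul_kerMat_le_of_head_of_tail (hlam : ∀ i, 0 ≤ lam i)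
    (hdecay : ∀ i, k ≤ i → lam i ≤ lam (k - 1)) (hk : 1 ≤ k) (hkn : k ≤ n)
    (hX : ∀ j, Summable fun i => lam i * ψ i (X j) ^ 2) {β : ℝ} (hβ : 0 ≤ β)
    (hhead : ∀ z : Fin n → ℝ, ∑ i ∈ Finset.range k, (∑ j, z j * ψ i (X j)) ^ 2 ≤
      6 * β * (n + k * Real.log k) * (z ⬝ᵥ z))
    (htail : ∀ z : Fin n → ℝ, ∑' i, lam (k + i) * (∑ j, z j * ψ (k + i) (X j)) ^ 2 ≤
      6 * β * (n * opTail lam k + Real.log (k + 1) * trTail lam k) * (z ⬝ᵥ z)) :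
    eigval ((n : ℝ)⁻¹ • kerMat lam ψ X) k ≤
      12 * β * ((1 + (k : ℝ) * Real.log k / n) * lam (k - 1) +
        Real.log ((k : ℝ) + 1) * trTail lam k / n) := by
  refine (eigval_inv_smul_kerMat_le hlam hk hkn hX hhead htail).trans ?_
  have hn_pos : (0 : ℝ) < n := by exact_mod_cast hk.trans hkn
  have hlam_k := hlam (k - 1)
  have hop : opTail lam k ≤ lam (k - 1) := ciSup_le fun i => hdecay _ (by omega)
  have htr : 0 ≤ trTail lam k := tsum_nonneg fun i => hlam (k + i)
  have hlog_succ : 0 ≤ Real.log ((k : ℝ) + 1) :=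
    Real.log_nonneg (le_add_of_nonneg_left k.cast_nonneg)
  calc (n : ℝ)⁻¹ * (lam (k - 1) * (6 * β * (n + k * Real.log k)) +
        6 * β * (n * opTail lam k + Real.log (k + 1) * trTail lam k))
      = 6 * β * ((1 + k * Real.log k / n) * lam (k - 1) + opTail lam k +
          Real.log (k + 1) * trTail lam k / n) := by field_simp; ring
    _ ≤ 6 * β * (2 * ((1 + k * Real.log k / n) * lam (k - 1) +
          Real.log (k + 1) * trTail lam k / n)) := by
        have hcross : 0 ≤ k * Real.log k / n * lam (k - 1) := by positivity
        have htrace : 0 ≤ Real.log (k + 1) * trTail lam k / n := by positivity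
        gcongr
        linarith
    _ = _ := by ring

end KernelMatrix

theorem ofReal_one_sub_sub_le_measure {Ω : Type*} [MeasurableSpace Ω] {P : Measure Ω}
    [IsProbabilityMeasure P] {G A B : Set Ω} (hcover : ∀ᵐ ω ∂P, ω ∉ A → ω ∉ B → ω ∈ G)
    {a b : ℝ} (ha : 0 ≤ a) (hb : 0 ≤ b) (hA : P A ≤ ENNReal.ofReal a)
    (hB : P B ≤ ENNReal.ofReal b) : ENNReal.ofReal (1 - a - b) ≤ P G := by
  rw [ENNReal.ofReal_sub _ hb, ENNReal.ofReal_sub _ ha, ENNReal.ofReal_one, tsub_le_iff_right,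
    tsub_le_iff_right, ← measure_univ (μ := P)]
  calc P Set.univ ≤ P (G ∪ B ∪ A) := measure_mono_ae <| hcover.mono fun ω hω _ => by
        by_cases hωA : ω ∈ A
        · exact Or.inr hωA
        by_cases hωB : ω ∈ B
        · exact Or.inl (Or.inr hωB)
        exact Or.inl (Or.inl (hω hωA hωB))
    _ ≤ P G + P B + P A := (measure_union_le _ _).trans (by gcongr; exact measure_union_le _ _)
    _ ≤ P G + ENNReal.ofReal b + ENNReal.ofReal a := by gcongr

section Main

variable [MeasurableSpace 𝒳] {μ : Measure 𝒳} [IsProbabilityMeasure μ] {lam : ℕ → ℝ}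
  {ψ : ℕ → 𝒳 → ℝ} {n k : ℕ}

theorem rEff_nonneg (hlam : ∀ i, 0 ≤ lam i) (k : ℕ) : 0 ≤ rEff lam k :=
  div_nonneg (tsum_nonneg fun i => hlam (k + i)) (Real.iSup_nonneg fun i => hlam (k + i))

theorem kernel_matrix_eigenvalue_upper_bound_general (hlam : ∀ i, 0 ≤ lam i)
    (hsum : Summable lam) (hψ : OrthonormalFamily μ ψ) (hdecay : ∀ i, k ≤ i → lam i ≤ lam (k - 1))
    (hβ : BetaFinite μ lam ψ k) (hk : 1 ≤ k) (hkn : k ≤ n) :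
    ENNReal.ofReal (1 - rEff lam k / (k : ℝ) ^ 4 * Real.exp (-(n / rEff lam k)) -
        Real.exp (-max ((n : ℝ) / k) (Real.log k))) ≤
      iid μ n {X : Fin n → 𝒳 | eigval ((n : ℝ)⁻¹ • kerMat lam ψ X) k ≤
        12 * betaQ μ lam ψ k * ((1 + (k : ℝ) * Real.log k / n) * lam (k - 1) +
          Real.log ((k : ℝ) + 1) * trTail lam k / n)} := by
  have hsummable : ∀ᵐ X : Fin n → 𝒳 ∂(Measure.pi fun _ => μ),
      ∀ j, Summable fun i => lam i * ψ i (X j) ^ 2 :=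
    eventually_all.2 fun j => (Measure.tendsto_eval_ae_ae (μ := fun _ : Fin n => μ) (i := j))
      |>.eventually (hψ.ae_summable_mul_sq hlam hsum)
  refine ofReal_one_sub_sub_le_measure (hsummable.mono fun X hX htail hhead => ?_)
    (mul_nonneg (div_nonneg (rEff_nonneg hlam k) (by positivity)) (Real.exp_pos _).le)
    (Real.exp_pos _).le (measure_exists_lt_tsum_tail_mul_sq_le hψ hlam hsum hβ hk n)
    (measure_exists_lt_sum_range_sq_le hψ hβ hk n)
  simp only [Set.mem_ofPred_eq, not_exists, not_lt] at htail hhead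
  exact eigval_inv_smul_kerMat_le_of_head_of_tail hlam hdecay hk hkn hX
    (zero_le_one.trans (one_le_betaQ hψ hβ hk)) hhead htail

theorem one_sub_four_mul_exp_sub_two_mul_exp_le {r β : ℝ} (hr : 0 ≤ r) (hβ : 1 ≤ β) (n k : ℕ) :
    1 - 4 * (r / (k : ℝ) ^ 4) * Real.exp (-(1 / β) * (n / r)) -
        2 * Real.exp (-(1 / β) * max ((n : ℝ) / k) (Real.log k)) ≤
      1 - r / (k : ℝ) ^ 4 * Real.exp (-(n / r)) - Real.exp (-max ((n : ℝ) / k) (Real.log k)) := by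
  have hexp {x : ℝ} (hx : 0 ≤ x) : Real.exp (-x) ≤ Real.exp (-(1 / β) * x) := by
    rw [Real.exp_le_exp, neg_mul, neg_le_neg_iff]
    exact mul_le_of_le_one_left hx (div_le_one_of_le₀ hβ (zero_le_one.trans hβ))
  have hcoeff : 0 ≤ r / (k : ℝ) ^ 4 := by positivity
  have htail := mul_le_mul_of_nonneg_left (hexp (div_nonneg n.cast_nonneg hr)) hcoeff
  have hhead : Real.exp (-max ((n : ℝ) / k) (Real.log k)) ≤
      Real.exp (-(1 / β) * max ((n : ℝ) / k) (Real.log k)) :=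
    hexp (le_max_of_le_left (by positivity))
  linarith [mul_nonneg hcoeff (Real.exp_pos (-(n / r))).le,
    Real.exp_pos (-max ((n : ℝ) / k) (Real.log k))]

end Main

theorem kernel_matrix_eigenvalue_upper_bound :
    ∃ c : ℝ, 0 < c ∧ ∃ c₂ : ℝ, 0 < c₂ ∧
      ∀ (𝒳 : Type u) [MeasurableSpace 𝒳] (μ : Measure 𝒳) [IsProbabilityMeasure μ]
        (lam : ℕ → ℝ) (ψ : ℕ → 𝒳 → ℝ),
        (∀ i, 0 ≤ lam i) → Summable lam →
        OrthonormalFamily μ ψ →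
        (∀ i j : ℕ, i ≤ j → lam j ≤ lam i) →
        (∀ k, BetaFinite μ lam ψ k) →
        RegularityAssumption μ lam ψ →
        ∀ n k : ℕ, 1 ≤ k → k ≤ n →
          ENNReal.ofReal
              (1 - 4 * (rEff lam k / (k : ℝ) ^ 4) *
                  Real.exp (-(c / betaQ μ lam ψ k) * ((n : ℝ) / rEff lam k)) -
                2 * Real.exp (-(c / betaQ μ lam ψ k) * max ((n : ℝ) / (k : ℝ)) (Real.log k))) ≤
            iid μ n {X : Fin n → 𝒳 |
              eigval ((n : ℝ)⁻¹ • kerMat lam ψ X) k ≤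
                c₂ * betaQ μ lam ψ k *
                  ((1 + (k : ℝ) * Real.log k / (n : ℝ)) * lam (k - 1) +
                    Real.log ((k : ℝ) + 1) * trTail lam k / (n : ℝ))} := by
  exact ⟨1, one_pos, 12, by norm_num, fun 𝒳 _ μ _ lam ψ hlam hsum hψ hanti hβ _ n k hk hkn =>
    (ENNReal.ofReal_le_ofReal <| one_sub_four_mul_exp_sub_two_mul_exp_le (rEff_nonneg hlam k)
      (one_le_betaQ hψ (hβ k) hk) n k).trans <|
    kernel_matrix_eigenvalue_upper_bound_general hlam hsum hψ (fun i hi => hanti _ i (by omega))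
      (hβ k) hk hkn⟩

end KRRPaper

end
end

section
/- Singular value concentration lemma. There exist absolute constants c', c₂ > 0 such that for any n ≥ 1 and k ∈ {1,…,n} with β_k < ∞, with probability at least 1 − 2·exp(−(c'/β_k)·max(n/k, log k)) over X drawn i.i.d. from μ, both of the following hold simultaneously: (1) μ_k(ψ_{≤k}(X)^⊤ψ_{≤k}(X)) ≥ max( √n − √((1/2)·max(n, β_k·(1+1/c')·k·log k)) , 0 )², and (2) μ₁(ψ_{≤k}(X)^⊤ψ_{≤k}(X)) ≤ c₂·max(n, β_k·k·log k). Moreover, there exist absolute constants c, c₁ > 0 such that if c·β_k·k·log(k) ≤ n, then with probability at least 1 − 2·exp(−(c'/β_k)·(n/k)): c₁·n ≤ μ_k(ψ_{≤k}(X)^⊤ψ_{≤k}(X)) ≤ μ₁(ψ_{≤k}(X)^⊤ψ_{≤k}(X)) ≤ c₂·n. -/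
open MeasureTheory Matrix Filter

noncomputable section

namespace KRRPaper

universe u

variable {𝒳 : Type u}

/-!
Write `Yᵢ = (ψ₁(xᵢ), …, ψ_k(xᵢ))`, so that `ψ_{≤k}(X)ᵀ ψ_{≤k}(X)` is the sum of the independent
rank-one matrices `Yᵢ Yᵢᵀ`, with `𝔼 Yᵢ Yᵢᵀ = 1` and `‖Yᵢ‖² ≤ R = β_k k`. Consider the random walks
`A ↦ A ± Yᵢ Yᵢᵀ` started at a large multiple `T • 1` of the identity. As long as `A ≥ p R`, one
step changes `tr (A ^ p)` by `± p ⟨Yᵢ, A ^ (p - 1) Yᵢ⟩` up to a factor `3`, and by isotropy this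
increment has expectation `± p tr (A ^ (p - 1))`. Hence `𝔼 tr (A ^ p)` is multiplied in every step
by at most `1 + 3 p / T` for the increasing walk and `1 - p / (3 T)` for the decreasing one, and
Markov's inequality for `tr (A ^ p)` bounds the extreme eigenvalues. The bound on the smallest
eigenvalue needs `n` to be at least a multiple of `R log k`; otherwise the lower bound to be proved
is `0`.
-/

lemma sum_mul_sum_le_of_monovary {ι α : Type*} [Fintype ι] [CommRing α] [LinearOrder α]
    [IsStrictOrderedRing α] {w f g : ι → α} (hw : 0 ≤ w) (hfg : Monovary f g) :
    (∑ i, w i * f i) * ∑ i, w i * g i ≤ (∑ i, w i) * ∑ i, w i * (f i * g i) := by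
  have hpos : 0 ≤ ∑ i, ∑ j, w i * w j * ((f j - f i) * (g j - g i)) :=
    Finset.sum_nonneg fun i _ => Finset.sum_nonneg fun j _ =>
      mul_nonneg (mul_nonneg (hw i) (hw j)) (hfg.sub_mul_sub_nonneg i j)
  have hexpand : ∑ i, ∑ j, w i * w j * ((f j - f i) * (g j - g i)) =
      2 * ((∑ i, w i) * ∑ i, w i * (f i * g i) - (∑ i, w i * f i) * ∑ i, w i * g i) := by
    calc
      _ = ∑ i, ∑ j, (w i * (w j * (f j * g j)) + w i * (f i * g i) * w j
            - w i * f i * (w j * g j) - w i * g i * (w j * f j)) :=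
        Finset.sum_congr rfl fun i _ => Finset.sum_congr rfl fun j _ => by ring
      _ = _ := by
        simp only [Finset.sum_sub_distrib, Finset.sum_add_distrib, ← Finset.sum_mul_sum]
        ring
  linarith [nonneg_of_mul_nonneg_right (hexpand ▸ hpos) two_pos]

section LoewnerOrder

open scoped MatrixOrder

variable {ι : Type*} {A B : Matrix ι ι ℝ}

lemma vecMulVec_self_nonneg [Finite ι] (y : ι → ℝ) : 0 ≤ vecMulVec y y :=
  Matrix.nonneg_iff_posSemidef.2 (by simpa using posSemidef_vecMulVec_self_star y)

variable [Fintype ι]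

lemma dotProduct_self_nonneg (y : ι → ℝ) : 0 ≤ y ⬝ᵥ y :=
  Finset.sum_nonneg fun i _ => mul_self_nonneg (y i)

lemma dotProduct_mulVec_eq_sum (M : Matrix ι ι ℝ) (y : ι → ℝ) :
    y ⬝ᵥ M *ᵥ y = ∑ a, ∑ b, M a b * (y a * y b) := by
  simp only [dotProduct, mulVec, Finset.mul_sum]
  exact Finset.sum_congr rfl fun a _ => Finset.sum_congr rfl fun b _ => by ring

lemma dotProduct_mulVec_mono (hAB : A ≤ B) (y : ι → ℝ) : y ⬝ᵥ A *ᵥ y ≤ y ⬝ᵥ B *ᵥ y := by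
  simpa [sub_mulVec, dotProduct_sub] using (Matrix.le_iff.1 hAB).dotProduct_mulVec_nonneg y

lemma trace_mono (hAB : A ≤ B) : A.trace ≤ B.trace := by
  simpa [trace_sub] using (Matrix.le_iff.1 hAB).trace_nonneg

variable [DecidableEq ι]

lemma vecMulVec_self_le_smul_one (y : ι → ℝ) : vecMulVec y y ≤ (y ⬝ᵥ y) • 1 := by
  refine Matrix.le_iff.2 (PosSemidef.of_dotProduct_mulVec_nonneg ?_ fun x => ?_)
  · ext a b
    simp [vecMulVec_apply, one_apply, mul_comm, eq_comm]
  · have hcs := Finset.sum_mul_sq_le_sq_mul_sq Finset.univ y x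
    simp only [sub_mulVec, smul_mulVec, one_mulVec, vecMulVec_mulVec, dotProduct_sub,
      dotProduct_smul, star_trivial]
    simp only [dotProduct, smul_eq_mul, MulOpposite.smul_eq_mul_unop, MulOpposite.unop_op,
      ← pow_two, mul_comm (x _)] at hcs ⊢
    nlinarith

lemma smul_one_le_sub_vecMulVec {t R : ℝ} (hA : (t + R) • 1 ≤ A) {y : ι → ℝ}
    (hy : y ⬝ᵥ y ≤ R) : t • 1 ≤ A - vecMulVec y y := by
  have hrank : vecMulVec y y ≤ R • 1 :=
    (vecMulVec_self_le_smul_one y).trans (smul_le_smul_of_nonneg_right hy zero_le_one)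
  simpa [add_smul] using sub_le_sub hA hrank

lemma pow_nonneg_of_nonneg (hA : 0 ≤ A) (m : ℕ) : 0 ≤ A ^ m :=
  Matrix.nonneg_iff_posSemidef.2 ((Matrix.nonneg_iff_posSemidef.1 hA).pow m)

lemma trace_pow_nonneg (hA : 0 ≤ A) (m : ℕ) : 0 ≤ (A ^ m).trace := by
  simpa using trace_mono (pow_nonneg_of_nonneg hA m)

lemma smul_pow_le_pow_succ {t : ℝ} (hA : 0 ≤ A) (htA : t • 1 ≤ A) (m : ℕ) :
    t • A ^ m ≤ A ^ (m + 1) := by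
  have h : 0 ≤ (A - t • 1) * A ^ m :=
    ((Commute.refl A).sub_left ((Commute.one_left A).smul_left t) |>.pow_right m).mul_nonneg
      (sub_nonneg.2 htA) (pow_nonneg_of_nonneg hA m)
  simpa [sub_mul, pow_succ'] using h

lemma pow_succ_le_smul_pow {T : ℝ} (hA : 0 ≤ A) (hAT : A ≤ T • 1) (m : ℕ) :
    A ^ (m + 1) ≤ T • A ^ m := by
  have h : 0 ≤ (T • 1 - A) * A ^ m :=
    ((((Commute.one_left A).smul_left T).sub_left (Commute.refl A)).pow_right m).mul_nonneg
      (sub_nonneg.2 hAT) (pow_nonneg_of_nonneg hA m)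
  simpa [sub_mul, pow_succ'] using h

lemma pow_eq_conj_diagonal_eigenvalues (hA : A.IsHermitian) (m : ℕ) :
    A ^ m = (hA.eigenvectorUnitary : Matrix ι ι ℝ) * diagonal (hA.eigenvalues ^ m) *
      (hA.eigenvectorUnitary : Matrix ι ι ℝ)ᵀ := by
  conv_lhs => rw [hA.spectral_theorem, ← map_pow, diagonal_pow]
  simp [Unitary.conjStarAlgAut_apply, star_eq_conjTranspose,
    conjTranspose_eq_transpose_of_trivial]

lemma trace_pow_eq_sum_eigenvalues_pow (hA : A.IsHermitian) (m : ℕ) :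
    (A ^ m).trace = ∑ i, hA.eigenvalues i ^ m := by
  have hU : (hA.eigenvectorUnitary : Matrix ι ι ℝ)ᵀ * hA.eigenvectorUnitary = 1 :=
    Unitary.coe_star_mul_self hA.eigenvectorUnitary
  rw [pow_eq_conj_diagonal_eigenvalues hA, trace_mul_comm, ← Matrix.mul_assoc, hU, Matrix.one_mul,
    trace_diagonal]
  rfl

lemma dotProduct_pow_mulVec_eq_sum (hA : A.IsHermitian) (y : ι → ℝ) (m : ℕ) :
    y ⬝ᵥ A ^ m *ᵥ y =
      ∑ i, ((hA.eigenvectorUnitary : Matrix ι ι ℝ)ᵀ *ᵥ y) i ^ 2 * hA.eigenvalues i ^ m := by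
  rw [pow_eq_conj_diagonal_eigenvalues hA, ← mulVec_mulVec, ← mulVec_mulVec, dotProduct_mulVec,
    ← mulVec_transpose, dotProduct]
  refine Finset.sum_congr rfl fun i _ => ?_
  rw [mulVec_diagonal, Pi.pow_apply]
  ring

lemma dotProduct_pow_mulVec_mul_le (hA : 0 ≤ A) (y : ι → ℝ) (i j : ℕ) :
    (y ⬝ᵥ A ^ i *ᵥ y) * (y ⬝ᵥ A ^ j *ᵥ y) ≤ (y ⬝ᵥ y) * (y ⬝ᵥ A ^ (i + j) *ᵥ y) := by
  have hpsd := Matrix.nonneg_iff_posSemidef.1 hA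
  have heig : 0 ≤ hpsd.1.eigenvalues := hpsd.eigenvalues_nonneg
  have hmono : Monovary (hpsd.1.eigenvalues ^ i) (hpsd.1.eigenvalues ^ j) :=
    ((monovary_self _).pow_left₀ heig i).pow_right₀ heig j
  have hcheb := sum_mul_sum_le_of_monovary
    (w := fun a => ((hpsd.1.eigenvectorUnitary : Matrix ι ι ℝ)ᵀ *ᵥ y) a ^ 2)
    (fun a => sq_nonneg _) hmono
  have hzero := dotProduct_pow_mulVec_eq_sum hpsd.1 y 0
  simp only [pow_zero, one_mulVec, mul_one] at hzero
  simpa only [hzero, dotProduct_pow_mulVec_eq_sum hpsd.1, Pi.pow_apply, ← pow_add] using hcheb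

lemma le_smul_one_of_trace_pow_lt {s : ℝ} {p : ℕ} (hA : 0 ≤ A) (hs : 0 ≤ s)
    (htr : (A ^ p).trace < s ^ p) : A ≤ s • 1 := by
  have hpsd := Matrix.nonneg_iff_posSemidef.1 hA
  have heig (i : ι) : hpsd.1.eigenvalues i ≤ s := by
    refine (lt_of_pow_lt_pow_left₀ p hs (lt_of_le_of_lt ?_ htr)).le
    rw [trace_pow_eq_sum_eigenvalues_pow hpsd.1]
    exact Finset.single_le_sum (fun j _ => pow_nonneg (hpsd.eigenvalues_nonneg j) p)
      (Finset.mem_univ i)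
  rw [← Algebra.algebraMap_eq_smul_one,
    le_algebraMap_iff_spectrum_le hpsd.1.isSelfAdjoint, hpsd.1.spectrum_real_eq_range_eigenvalues]
  exact Set.forall_mem_range.2 heig

lemma dotProduct_mul_pow_succ_mulVec (y : ι → ℝ) (i j : ℕ) :
    y ⬝ᵥ (A ^ j * (A + vecMulVec y y) ^ (i + 1)) *ᵥ y =
      y ⬝ᵥ (A ^ (j + 1) * (A + vecMulVec y y) ^ i) *ᵥ y +
        (y ⬝ᵥ A ^ j *ᵥ y) * (y ⬝ᵥ (A + vecMulVec y y) ^ i *ᵥ y) := by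
  have hsplit : A ^ j * (A + vecMulVec y y) ^ (i + 1) =
      A ^ (j + 1) * (A + vecMulVec y y) ^ i +
        vecMulVec (A ^ j *ᵥ y) (y ᵥ* (A + vecMulVec y y) ^ i) := by
    rw [pow_succ' (A + vecMulVec y y), ← vecMulVec_mul, ← mul_vecMulVec, pow_succ]
    noncomm_ring
  rw [hsplit, add_mulVec, dotProduct_add, vecMulVec_mulVec, dotProduct_smul,
    ← dotProduct_mulVec, MulOpposite.smul_eq_mul_unop, MulOpposite.unop_op]

lemma dotProduct_pow_mulVec_nonneg (hA : 0 ≤ A) (y : ι → ℝ) (m : ℕ) : 0 ≤ y ⬝ᵥ A ^ m *ᵥ y := by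
  simpa using dotProduct_mulVec_mono (pow_nonneg_of_nonneg hA m) y

lemma dotProduct_pow_mulVec_le_dotProduct_mul_pow (hA : 0 ≤ A) (y : ι → ℝ) (i j : ℕ) :
    y ⬝ᵥ A ^ (i + j) *ᵥ y ≤ y ⬝ᵥ (A ^ j * (A + vecMulVec y y) ^ i) *ᵥ y := by
  induction i generalizing j with
  | zero => simp
  | succ i ih =>
    have hB : 0 ≤ A + vecMulVec y y := add_nonneg hA (vecMulVec_self_nonneg y)
    calc
      y ⬝ᵥ A ^ (i + 1 + j) *ᵥ y = y ⬝ᵥ A ^ (i + (j + 1)) *ᵥ y := by rw [add_right_comm, add_assoc]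
      _ ≤ y ⬝ᵥ (A ^ (j + 1) * (A + vecMulVec y y) ^ i) *ᵥ y := ih (j + 1)
      _ ≤ y ⬝ᵥ (A ^ j * (A + vecMulVec y y) ^ (i + 1)) *ᵥ y := by
        rw [dotProduct_mul_pow_succ_mulVec]
        exact le_add_of_nonneg_right (mul_nonneg (dotProduct_pow_mulVec_nonneg hA y j)
          (dotProduct_pow_mulVec_nonneg hB y i))

lemma dotProduct_mul_pow_mulVec_le {t : ℝ} (ht : 0 < t) (htA : t • 1 ≤ A) (y : ι → ℝ)
    (i j : ℕ) :
    y ⬝ᵥ (A ^ j * (A + vecMulVec y y) ^ i) *ᵥ y ≤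
      (1 + y ⬝ᵥ y / t) ^ i * (y ⬝ᵥ A ^ (i + j) *ᵥ y) := by
  have hA : 0 ≤ A := (smul_nonneg ht.le zero_le_one).trans htA
  have hyy : 0 ≤ y ⬝ᵥ y := dotProduct_self_nonneg y
  induction i generalizing j with
  | zero => simp
  | succ i ih =>
    have hshift : y ⬝ᵥ A ^ (i + j) *ᵥ y ≤ y ⬝ᵥ A ^ (i + j + 1) *ᵥ y / t := by
      rw [le_div_iff₀' ht]
      simpa [smul_mulVec] using dotProduct_mulVec_mono (smul_pow_le_pow_succ hA htA (i + j)) y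
    have hnext := ih (j + 1)
    have hzero := ih 0
    simp only [pow_zero, one_mul, add_zero] at hzero
    set q := 1 + y ⬝ᵥ y / t
    have : 0 ≤ q := by positivity
    calc
      _ = y ⬝ᵥ (A ^ (j + 1) * (A + vecMulVec y y) ^ i) *ᵥ y +
          (y ⬝ᵥ A ^ j *ᵥ y) * (y ⬝ᵥ (A + vecMulVec y y) ^ i *ᵥ y) :=
        dotProduct_mul_pow_succ_mulVec y i j
      _ ≤ q ^ i * (y ⬝ᵥ A ^ (i + (j + 1)) *ᵥ y) +
          (y ⬝ᵥ A ^ j *ᵥ y) * (q ^ i * (y ⬝ᵥ A ^ i *ᵥ y)) := by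
        gcongr
        exact dotProduct_pow_mulVec_nonneg hA y j
      _ ≤ q ^ i * (y ⬝ᵥ A ^ (i + (j + 1)) *ᵥ y) +
          q ^ i * ((y ⬝ᵥ y) * (y ⬝ᵥ A ^ (i + j) *ᵥ y)) := by
        rw [mul_left_comm]
        gcongr _ + _ * ?_
        rw [mul_comm]
        exact dotProduct_pow_mulVec_mul_le hA y i j
      _ ≤ q ^ i * (y ⬝ᵥ A ^ (i + (j + 1)) *ᵥ y) +
          q ^ i * ((y ⬝ᵥ y) * (y ⬝ᵥ A ^ (i + j + 1) *ᵥ y / t)) := by gcongr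
      _ = q ^ (i + 1) * (y ⬝ᵥ A ^ (i + 1 + j) *ᵥ y) := by
        rw [show i + (j + 1) = i + j + 1 by ring, show i + 1 + j = i + j + 1 by ring]
        ring

lemma trace_pow_succ_add_vecMulVec (y : ι → ℝ) (r : ℕ) :
    ((A + vecMulVec y y) ^ (r + 1)).trace = (A ^ (r + 1)).trace +
      ∑ i ∈ Finset.range (r + 1), y ⬝ᵥ (A ^ (r - i) * (A + vecMulVec y y) ^ i) *ᵥ y := by
  set B := A + vecMulVec y y with hB
  have hstep (i : ℕ) (hi : i ∈ Finset.range (r + 1)) :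
      y ⬝ᵥ (A ^ (r - i) * B ^ i) *ᵥ y =
        (B ^ (i + 1) * A ^ (r + 1 - (i + 1))).trace - (B ^ i * A ^ (r + 1 - i)).trace := by
    have hi' : r + 1 - i = r - i + 1 := by have := Finset.mem_range.1 hi; omega
    rw [Nat.add_sub_add_right, hi', ← trace_sub, pow_succ, pow_succ']
    have hfactor : B ^ i * B * A ^ (r - i) - B ^ i * (A * A ^ (r - i)) =
        B ^ i * vecMulVec y y * A ^ (r - i) := by
      rw [hB]; noncomm_ring
    rw [hfactor, trace_mul_comm, ← Matrix.mul_assoc, mul_vecMulVec, trace_vecMulVec,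
      dotProduct_comm]
  rw [Finset.sum_congr rfl hstep, Finset.sum_range_sub fun i => (B ^ i * A ^ (r + 1 - i)).trace]
  simp

lemma le_trace_pow_succ_add_vecMulVec (hA : 0 ≤ A) (y : ι → ℝ) (r : ℕ) :
    (A ^ (r + 1)).trace + (r + 1) * (y ⬝ᵥ A ^ r *ᵥ y) ≤
      ((A + vecMulVec y y) ^ (r + 1)).trace := by
  rw [trace_pow_succ_add_vecMulVec]
  gcongr
  have hterm (i : ℕ) (hi : i ∈ Finset.range (r + 1)) :
      y ⬝ᵥ A ^ r *ᵥ y ≤ y ⬝ᵥ (A ^ (r - i) * (A + vecMulVec y y) ^ i) *ᵥ y := by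
    simpa [Nat.add_sub_cancel' (Finset.mem_range_succ_iff.1 hi)] using
      dotProduct_pow_mulVec_le_dotProduct_mul_pow hA y i (r - i)
  simpa using Finset.card_nsmul_le_sum _ _ _ hterm

lemma trace_pow_succ_add_vecMulVec_le {t : ℝ} (ht : 0 < t) (htA : t • 1 ≤ A) (y : ι → ℝ) (r : ℕ) :
    ((A + vecMulVec y y) ^ (r + 1)).trace ≤
      (A ^ (r + 1)).trace + (r + 1) * ((1 + y ⬝ᵥ y / t) ^ r * (y ⬝ᵥ A ^ r *ᵥ y)) := by
  have hA : 0 ≤ A := (smul_nonneg ht.le zero_le_one).trans htA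
  have hq : 1 ≤ 1 + y ⬝ᵥ y / t :=
    le_add_of_nonneg_right (div_nonneg (dotProduct_self_nonneg y) ht.le)
  rw [trace_pow_succ_add_vecMulVec]
  gcongr
  have hterm (i : ℕ) (hi : i ∈ Finset.range (r + 1)) :
      y ⬝ᵥ (A ^ (r - i) * (A + vecMulVec y y) ^ i) *ᵥ y ≤
        (1 + y ⬝ᵥ y / t) ^ r * (y ⬝ᵥ A ^ r *ᵥ y) := by
    have hir : i ≤ r := Finset.mem_range_succ_iff.1 hi
    refine (dotProduct_mul_pow_mulVec_le ht htA y i (r - i)).trans ?_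
    rw [Nat.add_sub_cancel' hir]
    gcongr
    exact dotProduct_pow_mulVec_nonneg hA y r
  simpa using Finset.sum_le_card_nsmul _ _ _ hterm

lemma one_add_div_pow_le_three {t z : ℝ} (ht : 0 < t) (hz : 0 ≤ z) {r : ℕ} (hr : r * z ≤ t) :
    (1 + z / t) ^ r ≤ 3 := by
  calc
    (1 + z / t) ^ r ≤ Real.exp (z / t) ^ r := by
      gcongr
      linarith [Real.add_one_le_exp (z / t)]
    _ = Real.exp (r * z / t) := by rw [← Real.exp_nat_mul, mul_div_assoc]
    _ ≤ Real.exp 1 := Real.exp_le_exp.2 ((div_le_one ht).2 hr)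
    _ ≤ 3 := Real.exp_one_lt_three.le

lemma trace_pow_succ_add_vecMulVec_le_add_three_mul {t : ℝ} (ht : 0 < t) (htA : t • 1 ≤ A)
    {y : ι → ℝ} {r : ℕ} (hr : r * (y ⬝ᵥ y) ≤ t) :
    ((A + vecMulVec y y) ^ (r + 1)).trace ≤
      (A ^ (r + 1)).trace + 3 * (r + 1) * (y ⬝ᵥ A ^ r *ᵥ y) := by
  have hA : 0 ≤ A := (smul_nonneg ht.le zero_le_one).trans htA
  have hquad : 0 ≤ y ⬝ᵥ A ^ r *ᵥ y := dotProduct_pow_mulVec_nonneg hA y r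
  calc
    _ ≤ (A ^ (r + 1)).trace + (r + 1) * ((1 + y ⬝ᵥ y / t) ^ r * (y ⬝ᵥ A ^ r *ᵥ y)) :=
      trace_pow_succ_add_vecMulVec_le ht htA y r
    _ ≤ (A ^ (r + 1)).trace + (r + 1) * (3 * (y ⬝ᵥ A ^ r *ᵥ y)) := by
      gcongr
      exact one_add_div_pow_le_three ht (dotProduct_self_nonneg y) hr
    _ = _ := by ring

lemma trace_pow_succ_sub_vecMulVec_le {t : ℝ} (ht : 0 < t) {y : ι → ℝ}
    (htA : t • 1 ≤ A - vecMulVec y y) {r : ℕ} (hr : r * (y ⬝ᵥ y) ≤ t) :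
    ((A - vecMulVec y y) ^ (r + 1)).trace ≤
      (A ^ (r + 1)).trace - (r + 1) / 3 * (y ⬝ᵥ A ^ r *ᵥ y) := by
  obtain ⟨C, rfl⟩ : ∃ C, A = C + vecMulVec y y := ⟨_, (sub_add_cancel _ _).symm⟩
  rw [add_sub_cancel_right] at htA ⊢
  have hC : 0 ≤ C := (smul_nonneg ht.le zero_le_one).trans htA
  have hquad : y ⬝ᵥ (C + vecMulVec y y) ^ r *ᵥ y ≤ 3 * (y ⬝ᵥ C ^ r *ᵥ y) := by
    calc
      _ ≤ (1 + y ⬝ᵥ y / t) ^ r * (y ⬝ᵥ C ^ r *ᵥ y) := by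
        simpa using dotProduct_mul_pow_mulVec_le ht htA y r 0
      _ ≤ 3 * (y ⬝ᵥ C ^ r *ᵥ y) := by
        gcongr
        · exact dotProduct_pow_mulVec_nonneg hC y r
        · exact one_add_div_pow_le_three ht (dotProduct_self_nonneg y) hr
  have htrace := le_trace_pow_succ_add_vecMulVec hC y r
  nlinarith [mul_le_mul_of_nonneg_left hquad (r.cast_add_one_pos (α := ℝ)).le]

end LoewnerOrder

lemma inv_one_sub_le_exp {x : ℝ} (hx : 0 ≤ x) (hx' : x ≤ 1 / 2) :
    (1 - x)⁻¹ ≤ Real.exp (2 * x) := by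
  refine le_trans ?_ (Real.add_one_le_exp _)
  rw [inv_le_iff_one_le_mul₀ (by linarith)]
  nlinarith

lemma inv_one_add_le_exp {x : ℝ} (hx : 0 ≤ x) (hx' : x ≤ 1) :
    (1 + x)⁻¹ ≤ Real.exp (-(x / 2)) := by
  have habs : |x / 2| = x / 2 := abs_of_nonneg (by linarith)
  have hexp := (abs_le.1 (Real.abs_exp_sub_one_le (x := x / 2) (by linarith))).2
  rw [Real.exp_neg]
  exact inv_anti₀ (Real.exp_pos _) (by linarith)

section RandomWalk

open scoped ENNReal MatrixOrder

variable {Ω : Type*} [MeasurableSpace Ω]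

lemma aestronglyMeasurable_sum_pi {E : Type*} [AddCommMonoid E] [TopologicalSpace E]
    [ContinuousAdd E] {μ : Measure Ω} [SigmaFinite μ] {g : Ω → E}
    (hg : AEStronglyMeasurable g μ) (n : ℕ) :
    AEStronglyMeasurable (fun X : Fin n → Ω => ∑ i, g (X i)) (Measure.pi fun _ => μ) :=
  Finset.aestronglyMeasurable_fun_sum _ fun i _ =>
    hg.comp_quasiMeasurePreserving (Measure.quasiMeasurePreserving_eval (fun _ => μ) i)

-- `Q j` is the set of states the walk may be in when `j` steps are left.
lemma lintegral_pi_add_sum_le {E : Type*} [AddCommMonoid E] [TopologicalSpace E]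
    [ContinuousAdd E] {μ : Measure Ω} [SigmaFinite μ] {g : Ω → E}
    (hg : AEStronglyMeasurable g μ) {F : E → ℝ≥0∞} (hF : Continuous F) {ρ : ℝ≥0∞} (hρ : ρ ≠ ∞)
    {Q : ℕ → Set E} (hQ : ∀ j, ∀ a ∈ Q (j + 1), ∀ᵐ x ∂μ, a + g x ∈ Q j)
    (hstep : ∀ j, ∀ a ∈ Q (j + 1), ∫⁻ x, F (a + g x) ∂μ ≤ ρ * F a)
    (n : ℕ) {a : E} (ha : a ∈ Q n) :
    ∫⁻ X : Fin n → Ω, F (a + ∑ i, g (X i)) ∂(Measure.pi fun _ => μ) ≤ ρ ^ n * F a := by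
  induction n generalizing a with
  | zero => simp
  | succ n ih =>
    have hmp := measurePreserving_piFinSuccAbove (fun _ : Fin (n + 1) => μ) 0
    have hmeas : AEMeasurable (fun p : Ω × (Fin n → Ω) => F (a + g p.1 + ∑ i, g (p.2 i)))
        (μ.prod (Measure.pi fun _ => μ)) :=
      (hF.comp_aestronglyMeasurable ((aestronglyMeasurable_const.add hg.comp_fst).add
        (aestronglyMeasurable_sum_pi hg n).comp_snd)).aemeasurable
    calc
      _ = ∫⁻ p : Ω × (Fin n → Ω), F (a + g p.1 + ∑ i, g (p.2 i))
            ∂(μ.prod (Measure.pi fun _ => μ)) := by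
        rw [← hmp.lintegral_comp_emb (MeasurableEquiv.measurableEmbedding _)]
        simp [Fin.sum_univ_succ, Fin.tail, add_assoc]
      _ = ∫⁻ x, ∫⁻ X : Fin n → Ω, F (a + g x + ∑ i, g (X i)) ∂(Measure.pi fun _ => μ) ∂μ :=
        lintegral_prod _ hmeas
      _ ≤ ∫⁻ x, ρ ^ n * F (a + g x) ∂μ :=
        lintegral_mono_ae ((hQ n a ha).mono fun x hx => ih hx)
      _ = ρ ^ n * ∫⁻ x, F (a + g x) ∂μ := lintegral_const_mul' _ _ (ENNReal.pow_ne_top hρ)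
      _ ≤ ρ ^ n * (ρ * F a) := by gcongr; exact hstep n a ha
      _ = ρ ^ (n + 1) * F a := by rw [pow_succ, mul_assoc]

variable {ι : Type*} [Fintype ι] [DecidableEq ι]

lemma continuous_ofReal_trace_pow (p : ℕ) :
    Continuous fun A : Matrix ι ι ℝ => ENNReal.ofReal (A ^ p).trace :=
  ENNReal.continuous_ofReal.comp (continuous_id.pow p).matrix_trace

lemma measure_not_le_smul_one_le {ν : Measure Ω} {M : Ω → Matrix ι ι ℝ}
    (hM : AEStronglyMeasurable M ν) (hnonneg : ∀ᵐ ω ∂ν, 0 ≤ M ω) {s : ℝ} (hs : 0 < s) (p : ℕ) :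
    ν {ω | ¬ M ω ≤ s • 1} ≤
      (∫⁻ ω, ENNReal.ofReal (M ω ^ p).trace ∂ν) / ENNReal.ofReal (s ^ p) := by
  refine (measure_mono_ae ?_).trans (meas_ge_le_lintegral_div
    ((continuous_ofReal_trace_pow p).comp_aestronglyMeasurable hM).aemeasurable
    (ENNReal.ofReal_pos.2 (pow_pos hs p)).ne' ENNReal.ofReal_ne_top)
  filter_upwards [hnonneg] with ω hω hnot
  refine ENNReal.ofReal_le_ofReal (le_of_not_gt fun hlt => hnot ?_)
  exact le_smul_one_of_trace_pow_lt hω hs.le hlt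

lemma measure_pi_not_smul_one_add_sum_le {μ : Measure Ω} [SigmaFinite μ] {g : Ω → Matrix ι ι ℝ}
    (hg : AEStronglyMeasurable g μ) {p : ℕ} {ρ : ℝ} {Q : ℕ → Set (Matrix ι ι ℝ)}
    (hQ : ∀ j, ∀ A ∈ Q (j + 1), ∀ᵐ x ∂μ, A + g x ∈ Q j)
    (hstep : ∀ j, ∀ A ∈ Q (j + 1), ∫⁻ x, ENNReal.ofReal ((A + g x) ^ p).trace ∂μ ≤
      ENNReal.ofReal ρ * ENNReal.ofReal (A ^ p).trace)
    (hρ : 0 ≤ ρ) {n : ℕ} {T s : ℝ} (hT : T • 1 ∈ Q n) (hs : 0 < s)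
    (hnonneg : ∀ᵐ X : Fin n → Ω ∂(Measure.pi fun _ => μ), 0 ≤ T • 1 + ∑ i, g (X i)) :
    Measure.pi (fun _ : Fin n => μ) {X | ¬ T • 1 + ∑ i, g (X i) ≤ s • 1} ≤
      ENNReal.ofReal (Fintype.card ι * (ρ ^ n * (T / s) ^ p)) := by
  calc
    _ ≤ (∫⁻ X : Fin n → Ω, ENNReal.ofReal ((T • 1 + ∑ i, g (X i)) ^ p).trace
          ∂(Measure.pi fun _ => μ)) / ENNReal.ofReal (s ^ p) :=
      measure_not_le_smul_one_le
        (aestronglyMeasurable_const.add (aestronglyMeasurable_sum_pi hg n)) hnonneg hs p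
    _ ≤ ENNReal.ofReal ρ ^ n * ENNReal.ofReal ((T • (1 : Matrix ι ι ℝ)) ^ p).trace /
          ENNReal.ofReal (s ^ p) := by
      gcongr
      exact lintegral_pi_add_sum_le hg (continuous_ofReal_trace_pow p) ENNReal.ofReal_ne_top hQ
        hstep n hT
    _ = ENNReal.ofReal (Fintype.card ι * (ρ ^ n * (T / s) ^ p)) := by
      rw [← ENNReal.ofReal_pow hρ, ← ENNReal.ofReal_mul (pow_nonneg hρ n),
        ← ENNReal.ofReal_div_of_pos (pow_pos hs p), smul_pow, one_pow, trace_smul, trace_one,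
        smul_eq_mul, div_pow]
      congr 1
      ring

/-- `Y` is a random vector of `ι → ℝ` in isotropic position, `𝔼[Y Yᵀ] = 1`, whose squared Euclidean
norm is almost surely at most `R`. -/
structure IsBoundedIsotropic (μ : Measure Ω) (Y : Ω → ι → ℝ) (R : ℝ) : Prop where
  aestronglyMeasurable : AEStronglyMeasurable Y μ
  dotProduct_le : ∀ᵐ x ∂μ, Y x ⬝ᵥ Y x ≤ R
  integral_mul (a b : ι) : ∫ x, Y x a * Y x b ∂μ = (1 : Matrix ι ι ℝ) a b

namespace IsBoundedIsotropic

variable {μ : Measure Ω} {Y : Ω → ι → ℝ} {R : ℝ}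

lemma aestronglyMeasurable_vecMulVec (hY : IsBoundedIsotropic μ Y R) :
    AEStronglyMeasurable (fun x => vecMulVec (Y x) (Y x)) μ :=
  (continuous_id.matrix_vecMulVec continuous_id).comp_aestronglyMeasurable hY.aestronglyMeasurable

lemma integrable_mul [IsFiniteMeasure μ] (hY : IsBoundedIsotropic μ Y R) (a b : ι) :
    Integrable (fun x => Y x a * Y x b) μ := by
  have hmeas (c : ι) : AEStronglyMeasurable (fun x => Y x c) μ :=
    (continuous_apply c).comp_aestronglyMeasurable hY.aestronglyMeasurable
  refine .of_bound ((hmeas a).mul (hmeas b)) R ?_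
  filter_upwards [hY.dotProduct_le] with x hx
  have hcoord (c : ι) : Y x c ^ 2 ≤ R := by
    refine le_trans ?_ hx
    simpa only [dotProduct, ← pow_two] using
      Finset.single_le_sum (f := fun c => Y x c ^ 2) (fun c _ => sq_nonneg _) (Finset.mem_univ c)
  rw [Real.norm_eq_abs, abs_le]
  constructor <;> nlinarith [hcoord a, hcoord b, sq_nonneg (Y x a + Y x b),
    sq_nonneg (Y x a - Y x b)]

lemma integrable_dotProduct_mulVec [IsFiniteMeasure μ] (hY : IsBoundedIsotropic μ Y R)
    (M : Matrix ι ι ℝ) : Integrable (fun x => Y x ⬝ᵥ M *ᵥ Y x) μ := by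
  simp only [dotProduct_mulVec_eq_sum]
  exact integrable_finsetSum _ fun a _ => integrable_finsetSum _ fun b _ =>
    (hY.integrable_mul a b).const_mul _

lemma integral_dotProduct_mulVec [IsFiniteMeasure μ] (hY : IsBoundedIsotropic μ Y R)
    (M : Matrix ι ι ℝ) : ∫ x, Y x ⬝ᵥ M *ᵥ Y x ∂μ = M.trace := by
  have hint (a b : ι) := (hY.integrable_mul a b).const_mul (M a b)
  simp only [dotProduct_mulVec_eq_sum]
  rw [integral_finsetSum _ fun a _ => integrable_finsetSum _ fun b _ => hint a b]
  simp only [integral_finsetSum _ fun b _ => hint _ b, integral_const_mul, hY.integral_mul,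
    one_apply, mul_ite, mul_one, mul_zero, Finset.sum_ite_eq, Finset.mem_univ, if_true, trace,
    diag_apply]

variable [IsProbabilityMeasure μ]

lemma card_le (hY : IsBoundedIsotropic μ Y R) : Fintype.card ι ≤ R := by
  have hint := hY.integrable_dotProduct_mulVec 1
  have hone := hY.integral_dotProduct_mulVec 1
  simp only [one_mulVec, trace_one] at hint hone
  calc
    (Fintype.card ι : ℝ) = ∫ x, Y x ⬝ᵥ Y x ∂μ := hone.symm
    _ ≤ ∫ _, R ∂μ := integral_mono_ae hint (integrable_const R) hY.dotProduct_le
    _ = R := by simp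

lemma nonneg (hY : IsBoundedIsotropic μ Y R) : 0 ≤ R :=
  (Nat.cast_nonneg _).trans hY.card_le

lemma one_le [Nonempty ι] (hY : IsBoundedIsotropic μ Y R) : 1 ≤ R :=
  le_trans (by exact_mod_cast Fintype.card_pos) hY.card_le

lemma lintegral_ofReal_add_mul_dotProduct_mulVec (hY : IsBoundedIsotropic μ Y R)
    (M : Matrix ι ι ℝ) {c d : ℝ} (hnonneg : ∀ᵐ x ∂μ, 0 ≤ c + d * (Y x ⬝ᵥ M *ᵥ Y x)) :
    ∫⁻ x, ENNReal.ofReal (c + d * (Y x ⬝ᵥ M *ᵥ Y x)) ∂μ = ENNReal.ofReal (c + d * M.trace) := by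
  have hquad := (hY.integrable_dotProduct_mulVec M).const_mul d
  have hint : Integrable (fun x => c + d * (Y x ⬝ᵥ M *ᵥ Y x)) μ := (integrable_const c).add hquad
  rw [← ofReal_integral_eq_lintegral_ofReal hint hnonneg, integral_add (integrable_const c) hquad,
    integral_const_mul, hY.integral_dotProduct_mulVec, integral_const, probReal_univ, one_smul]

lemma lintegral_trace_add_vecMulVec_le (hY : IsBoundedIsotropic μ Y R) {A : Matrix ι ι ℝ} {t : ℝ}
    (ht : 0 < t) (htA : t • 1 ≤ A) {r : ℕ} (hr : r * R ≤ t) :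
    ∫⁻ x, ENNReal.ofReal ((A + vecMulVec (Y x) (Y x)) ^ (r + 1)).trace ∂μ ≤
      ENNReal.ofReal (1 + 3 * (r + 1) / t) * ENNReal.ofReal (A ^ (r + 1)).trace := by
  have hA : 0 ≤ A := (smul_nonneg ht.le zero_le_one).trans htA
  have hpoint : ∀ᵐ x ∂μ, ((A + vecMulVec (Y x) (Y x)) ^ (r + 1)).trace ≤
      (A ^ (r + 1)).trace + 3 * (r + 1) * (Y x ⬝ᵥ A ^ r *ᵥ Y x) :=
    hY.dotProduct_le.mono fun x hx => trace_pow_succ_add_vecMulVec_le_add_three_mul ht htA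
      ((mul_le_mul_of_nonneg_left hx r.cast_nonneg).trans hr)
  have htrace : (A ^ r).trace ≤ (A ^ (r + 1)).trace / t := by
    rw [le_div_iff₀' ht]
    simpa using trace_mono (smul_pow_le_pow_succ hA htA r)
  calc
    _ ≤ ∫⁻ x, ENNReal.ofReal ((A ^ (r + 1)).trace + 3 * (r + 1) * (Y x ⬝ᵥ A ^ r *ᵥ Y x)) ∂μ :=
      lintegral_mono_ae (hpoint.mono fun x hx => ENNReal.ofReal_le_ofReal hx)
    _ = ENNReal.ofReal ((A ^ (r + 1)).trace + 3 * (r + 1) * (A ^ r).trace) :=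
      hY.lintegral_ofReal_add_mul_dotProduct_mulVec _ (.of_forall fun x =>
        add_nonneg (trace_pow_nonneg hA _)
          (mul_nonneg (by positivity) (dotProduct_pow_mulVec_nonneg hA (Y x) r)))
    _ ≤ ENNReal.ofReal ((A ^ (r + 1)).trace + 3 * (r + 1) * ((A ^ (r + 1)).trace / t)) := by
      gcongr
    _ = ENNReal.ofReal ((1 + 3 * (r + 1) / t) * (A ^ (r + 1)).trace) := by ring_nf
    _ = _ := ENNReal.ofReal_mul (by positivity)

lemma lintegral_trace_sub_vecMulVec_le (hY : IsBoundedIsotropic μ Y R) {A : Matrix ι ι ℝ} {t T : ℝ}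
    (ht : 0 < t) (htA : (t + R) • 1 ≤ A) (hT : 0 < T) (hAT : A ≤ T • 1) {r : ℕ} (hr : r * R ≤ t) :
    ∫⁻ x, ENNReal.ofReal ((A - vecMulVec (Y x) (Y x)) ^ (r + 1)).trace ∂μ ≤
      ENNReal.ofReal (1 - (r + 1) / (3 * T)) * ENNReal.ofReal (A ^ (r + 1)).trace := by
  have hsub : ∀ᵐ x ∂μ, t • 1 ≤ A - vecMulVec (Y x) (Y x) :=
    hY.dotProduct_le.mono fun x hx => smul_one_le_sub_vecMulVec htA hx
  have hpoint : ∀ᵐ x ∂μ, ((A - vecMulVec (Y x) (Y x)) ^ (r + 1)).trace ≤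
      (A ^ (r + 1)).trace + -((r + 1) / 3) * (Y x ⬝ᵥ A ^ r *ᵥ Y x) := by
    filter_upwards [hY.dotProduct_le, hsub] with x hx htx
    rw [neg_mul, ← sub_eq_add_neg]
    exact trace_pow_succ_sub_vecMulVec_le ht htx
      ((mul_le_mul_of_nonneg_left hx r.cast_nonneg).trans hr)
  have hnonneg : ∀ᵐ x ∂μ, 0 ≤ (A ^ (r + 1)).trace + -((r + 1) / 3) * (Y x ⬝ᵥ A ^ r *ᵥ Y x) := by
    filter_upwards [hsub, hpoint] with x htx hx
    exact (trace_pow_nonneg ((smul_nonneg ht.le zero_le_one).trans htx) _).trans hx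
  have hA : 0 ≤ A := (smul_nonneg (add_nonneg ht.le hY.nonneg) zero_le_one).trans htA
  have htrace : (A ^ (r + 1)).trace / T ≤ (A ^ r).trace := by
    rw [div_le_iff₀' hT]
    simpa using trace_mono (pow_succ_le_smul_pow hA hAT r)
  calc
    _ ≤ ∫⁻ x, ENNReal.ofReal
          ((A ^ (r + 1)).trace + -((r + 1) / 3) * (Y x ⬝ᵥ A ^ r *ᵥ Y x)) ∂μ :=
      lintegral_mono_ae (hpoint.mono fun x hx => ENNReal.ofReal_le_ofReal hx)
    _ = ENNReal.ofReal ((A ^ (r + 1)).trace + -((r + 1) / 3) * (A ^ r).trace) :=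
      hY.lintegral_ofReal_add_mul_dotProduct_mulVec _ hnonneg
    _ ≤ ENNReal.ofReal ((A ^ (r + 1)).trace + -((r + 1) / 3) * ((A ^ (r + 1)).trace / T)) := by
      refine ENNReal.ofReal_le_ofReal (add_le_add_right ?_ _)
      exact mul_le_mul_of_nonpos_left htrace (by have := r.cast_nonneg (α := ℝ); linarith)
    _ = ENNReal.ofReal ((1 - (r + 1) / (3 * T)) * (A ^ (r + 1)).trace) := by
      congr 1; ring
    _ = _ := ENNReal.ofReal_mul' (trace_pow_nonneg hA _)

lemma ae_sum_vecMulVec_le (hY : IsBoundedIsotropic μ Y R) (n : ℕ) :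
    ∀ᵐ X : Fin n → Ω ∂(Measure.pi fun _ => μ),
      ∑ i, vecMulVec (Y (X i)) (Y (X i)) ≤ (n * R) • 1 := by
  have hcoord : ∀ᵐ X : Fin n → Ω ∂(Measure.pi fun _ => μ), ∀ i, Y (X i) ⬝ᵥ Y (X i) ≤ R :=
    eventually_all.2 fun i =>
      (Measure.tendsto_eval_ae_ae (μ := fun _ => μ) (i := i)).eventually hY.dotProduct_le
  filter_upwards [hcoord] with X hX
  calc
    ∑ i, vecMulVec (Y (X i)) (Y (X i)) ≤ ∑ _i : Fin n, R • (1 : Matrix ι ι ℝ) :=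
      Finset.sum_le_sum fun i _ => (vecMulVec_self_le_smul_one _).trans
        (smul_le_smul_of_nonneg_right (hX i) zero_le_one)
    _ = (n * R) • 1 := by simp [mul_smul, Nat.cast_smul_eq_nsmul]

lemma measure_pi_not_smul_one_sub_sum_vecMulVec_le [Nonempty ι] (hY : IsBoundedIsotropic μ Y R)
    {r n : ℕ} {T s : ℝ} (hT : (r + 1 + n) * R ≤ T) (hs : 0 < s) :
    Measure.pi (fun _ : Fin n => μ)
        {X | ¬ T • 1 - ∑ i, vecMulVec (Y (X i)) (Y (X i)) ≤ s • 1} ≤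
      ENNReal.ofReal (Fintype.card ι * ((1 - (r + 1) / (3 * T)) ^ n * (T / s) ^ (r + 1))) := by
  have hR := hY.one_le
  have hrT : (r + 1) * R ≤ T := by nlinarith [n.cast_nonneg (α := ℝ)]
  have hrT' : (r + 1 : ℝ) ≤ T := (le_mul_of_one_le_right (by positivity) hR).trans hrT
  have hT0 : 0 < T := lt_of_lt_of_le (by positivity) hrT'
  simp only [sub_eq_add_neg (T • (1 : Matrix ι ι ℝ)), ← Finset.sum_neg_distrib]
  refine measure_pi_not_smul_one_add_sum_le
    (Q := fun j => {A | ((r + 1) * R + j * R) • 1 ≤ A ∧ A ≤ T • 1})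
    hY.aestronglyMeasurable_vecMulVec.fun_neg (fun j A hA => ?_) (fun j A hA => ?_)
    ?_ ⟨?_, le_rfl⟩ hs ?_
  · filter_upwards [hY.dotProduct_le] with x hx
    have hlower : ((r + 1) * R + j * R + R) • 1 ≤ A := by
      simpa [add_mul, add_assoc] using hA.1
    rw [← sub_eq_add_neg]
    exact ⟨smul_one_le_sub_vecMulVec hlower hx,
      (sub_le_self A (vecMulVec_self_nonneg _)).trans hA.2⟩
  · have hlower : (r * R + (j + 1) * R + R) • 1 ≤ A := by
      convert hA.1 using 2
      push_cast
      ring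
    simp only [← sub_eq_add_neg]
    exact hY.lintegral_trace_sub_vecMulVec_le (by positivity) hlower hT0 hA.2
      (le_add_of_nonneg_right (by positivity))
  · rw [sub_nonneg, div_le_one (by positivity)]
    linarith
  · exact smul_le_smul_of_nonneg_right (by linarith) zero_le_one
  · filter_upwards [hY.ae_sum_vecMulVec_le n] with X hX
    rw [Finset.sum_neg_distrib, ← sub_eq_add_neg, sub_nonneg]
    exact hX.trans (smul_le_smul_of_nonneg_right (by nlinarith) zero_le_one)

lemma measure_pi_not_smul_one_add_sum_vecMulVec_le [Nonempty ι] (hY : IsBoundedIsotropic μ Y R)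
    {r n : ℕ} {T s : ℝ} (hT0 : 0 < T) (hT : r * R ≤ T) (hs : 0 < s) :
    Measure.pi (fun _ : Fin n => μ)
        {X | ¬ T • 1 + ∑ i, vecMulVec (Y (X i)) (Y (X i)) ≤ s • 1} ≤
      ENNReal.ofReal (Fintype.card ι * ((1 + 3 * (r + 1) / T) ^ n * (T / s) ^ (r + 1))) := by
  refine measure_pi_not_smul_one_add_sum_le (Q := fun _ => {A | T • 1 ≤ A})
    hY.aestronglyMeasurable_vecMulVec
    (fun _ A hA => .of_forall fun x => hA.trans (le_add_of_nonneg_right (vecMulVec_self_nonneg _)))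
    (fun _ A hA => hY.lintegral_trace_add_vecMulVec_le hT0 hA hT) (by positivity)
    (le_refl (T • (1 : Matrix ι ι ℝ))) hs
    (.of_forall fun X => ?_)
  exact add_nonneg (smul_nonneg hT0.le zero_le_one)
    (Finset.sum_nonneg fun i _ => vecMulVec_self_nonneg _)

theorem measure_pi_not_smul_one_le_sum_vecMulVec_le [Nonempty ι]
    (hY : IsBoundedIsotropic μ Y R) (n : ℕ) :
    Measure.pi (fun _ : Fin n => μ)
        {X | ¬ (n / 10 : ℝ) • 1 ≤ ∑ i, vecMulVec (Y (X i)) (Y (X i))} ≤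
      ENNReal.ofReal (Fintype.card ι * Real.exp (-(n / (15 * R)))) := by
  -- The power of the trace is the number `n = r + 1` of steps, so that every step contracts by
  -- `exp (-1 / (6 R))`, while Markov's inequality costs only `exp (1 / (10 R))` per power.
  obtain _ | r := n
  · simp
  have hR := hY.one_le
  set N : ℝ := ((r + 1 : ℕ) : ℝ) with hN
  have hr : (r + 1 : ℝ) = N := by simp [hN]
  have hN0 : 0 < N := by positivity
  have hs : 0 < 2 * (N * R) - N / 10 := by nlinarith
  have htail := hY.measure_pi_not_smul_one_sub_sum_vecMulVec_le (r := r) (n := r + 1)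
    (T := 2 * (N * R)) (by rw [hr]; linarith) hs
  simp only [sub_smul, sub_le_sub_iff_left] at htail
  have hdecay : 1 - N / (3 * (2 * (N * R))) ≤ Real.exp (-(1 / (6 * R))) := by
    refine le_trans (le_of_eq ?_) (Real.one_sub_le_exp_neg _)
    field_simp
    ring
  have hratio : 2 * (N * R) / (2 * (N * R) - N / 10) ≤ Real.exp (1 / (10 * R)) := by
    have hx : 1 / (20 * R) ≤ 1 / 2 := by
      rw [div_le_div_iff₀ (by positivity) two_pos]
      linarith
    convert inv_one_sub_le_exp (by positivity) hx using 2 <;> field_simp <;> ring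
  refine htail.trans (ENNReal.ofReal_le_ofReal ?_)
  gcongr
  rw [hr]
  calc
    _ ≤ Real.exp (-(1 / (6 * R))) ^ (r + 1) * Real.exp (1 / (10 * R)) ^ (r + 1) := by
      gcongr
      rw [sub_nonneg, div_le_one (by positivity)]
      nlinarith
    _ = Real.exp (-(N / (15 * R))) := by
      rw [← Real.exp_nat_mul, ← Real.exp_nat_mul, ← Real.exp_add]
      congr 1
      field_simp
      ring

theorem measure_pi_not_sum_vecMulVec_le_smul_one_le [Nonempty ι]
    (hY : IsBoundedIsotropic μ Y R) (n : ℕ) {s : ℝ} (hs : 0 ≤ s) :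
    Measure.pi (fun _ : Fin n => μ) {X | ¬ ∑ i, vecMulVec (Y (X i)) (Y (X i)) ≤ s • 1} ≤
      ENNReal.ofReal (Fintype.card ι * Real.exp (3 * n / R - s / (2 * R))) := by
  have hR := hY.one_le
  obtain ⟨r, hr⟩ := exists_nat_ge (s / R)
  rw [div_le_iff₀ (by positivity)] at hr
  set T := (r + 1) * R with hT
  have hT0 : 0 < T := by positivity
  have htail := hY.measure_pi_not_smul_one_add_sum_vecMulVec_le (r := r) (n := n) (s := T + s)
    hT0 (by linarith) (by positivity)
  simp only [add_smul, add_le_add_iff_left] at htail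
  have hgrowth : 1 + 3 * (r + 1) / T ≤ Real.exp (3 / R) := by
    refine le_trans (le_of_eq ?_) (Real.add_one_le_exp _)
    rw [hT]
    field_simp
    ring
  have hratio : T / (T + s) ≤ Real.exp (-(s / (2 * T))) := by
    have hx : s / T ≤ 1 := (div_le_one hT0).2 (by linarith)
    convert inv_one_add_le_exp (by positivity) hx using 2 <;> field_simp
  refine htail.trans (ENNReal.ofReal_le_ofReal ?_)
  gcongr
  calc
    _ ≤ Real.exp (3 / R) ^ n * Real.exp (-(s / (2 * T))) ^ (r + 1) := by gcongr
    _ = Real.exp (3 * n / R - s / (2 * R)) := by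
      rw [← Real.exp_nat_mul, ← Real.exp_nat_mul, ← Real.exp_add]
      congr 1
      rw [hT]
      push_cast
      field_simp
      ring

end IsBoundedIsotropic

end RandomWalk

section OrderedEigenvalues

open scoped MatrixOrder

variable {n j : ℕ} {M : Matrix (Fin n) (Fin n) ℝ}

lemma eigval_mem_spectrum (hM : M.IsHermitian) (hj : j - 1 < n) : eigval M j ∈ spectrum ℝ M := by
  rw [eigval, dif_pos hM, dif_pos hj]
  exact hM.eigenvalues_mem_spectrum_real _

lemma le_eigval_of_smul_one_le {a : ℝ} (hM : M.IsHermitian) (hj : j - 1 < n)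
    (h : a • 1 ≤ M) : a ≤ eigval M j := by
  rw [← Algebra.algebraMap_eq_smul_one, algebraMap_le_iff_le_spectrum hM.isSelfAdjoint] at h
  exact h _ (eigval_mem_spectrum hM hj)

lemma eigval_le_of_le_smul_one {a : ℝ} (hM : M.IsHermitian) (hj : j - 1 < n)
    (h : M ≤ a • 1) : eigval M j ≤ a := by
  rw [← Algebra.algebraMap_eq_smul_one, le_algebraMap_iff_spectrum_le hM.isSelfAdjoint] at h
  exact h _ (eigval_mem_spectrum hM hj)

lemma eigval_le_eigval_of_le {i : ℕ} (hij : i ≤ j) (hj : j - 1 < n) :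
    eigval M j ≤ eigval M i := by
  by_cases hM : M.IsHermitian
  · have hi : i - 1 < n := (Nat.sub_le_sub_right hij 1).trans_lt hj
    rw [eigval, eigval, dif_pos hM, dif_pos hj, dif_pos hM, dif_pos hi]
    exact Tuple.monotone_sort _ (Fin.rev_le_rev.2 (Nat.sub_le_sub_right hij 1))
  · rw [eigval, eigval, dif_neg hM, dif_neg hM]

end OrderedEigenvalues

lemma ofReal_one_sub_two_mul_le_measure {Ω : Type*} [MeasurableSpace Ω] {ν : Measure Ω}
    [IsProbabilityMeasure ν] {s t u : Set Ω} {e : ℝ} (he : 0 ≤ e) (hs : ν s ≤ ENNReal.ofReal e)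
    (ht : ν t ≤ ENNReal.ofReal e) (hu : sᶜ ∩ tᶜ ⊆ u) : ENNReal.ofReal (1 - 2 * e) ≤ ν u := by
  have hcover : Set.univ ⊆ s ∪ t ∪ u := fun ω _ => by
    by_cases h : ω ∈ s ∪ t
    · exact .inl h
    · exact .inr (hu (by simpa using h))
  rw [ENNReal.ofReal_sub _ (by positivity), ENNReal.ofReal_one, two_mul, ENNReal.ofReal_add he he,
    tsub_le_iff_left]
  calc
    1 = ν Set.univ := measure_univ.symm
    _ ≤ ν (s ∪ t) + ν u := (measure_mono hcover).trans (measure_union_le _ _)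
    _ ≤ ENNReal.ofReal e + ENNReal.ofReal e + ν u := by
      gcongr
      exact (measure_union_le _ _).trans (add_le_add hs ht)

lemma max_sqrt_sub_sqrt_half_max_sq_le {n : ℝ} (hn : 0 ≤ n) (m : ℝ) :
    max (√n - √(1 / 2 * max n m)) 0 ^ 2 ≤ n / 10 := by
  have hroot : 7 / 10 * √n ≤ √(1 / 2 * max n m) := by
    refine Real.le_sqrt_of_sq_le ?_
    rw [mul_pow, Real.sq_sqrt hn]
    linarith [le_max_left n m]
  calc
    max (√n - √(1 / 2 * max n m)) 0 ^ 2 ≤ (3 / 10 * √n) ^ 2 := by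
      gcongr
      exact max_le (by linarith) (by positivity)
    _ = 9 / 100 * n := by rw [mul_pow, Real.sq_sqrt hn]; norm_num
    _ ≤ n / 10 := by linarith

lemma max_sqrt_sub_sqrt_half_max_eq_zero {n m : ℝ} (hnm : n ≤ m / 2) :
    max (√n - √(1 / 2 * max n m)) 0 = 0 := by
  refine max_eq_right (sub_nonpos.2 (Real.sqrt_le_sqrt ?_))
  linarith [le_max_right n m]

lemma max_div_log_div_le {B N : ℝ} {n k : ℕ} (hB : 1 ≤ B) (hk : 1 ≤ k) (hn : n ≤ N)
    (hlog : B * k * Real.log k ≤ N) : max ((n : ℝ) / k) (Real.log k) / B ≤ N / (B * k) := by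
  have : (0 : ℝ) < k := Nat.cast_pos.2 hk
  rw [← max_div_div_right (zero_le_one.trans hB), div_div, mul_comm (k : ℝ) B]
  refine max_le (by gcongr) ((div_le_self (Real.log_natCast_nonneg k) hB).trans ?_)
  rwa [le_div_iff₀' (by positivity)]

section DesignMatrix

open scoped MatrixOrder

/-- The feature vector `(ψ₁(x), …, ψ_k(x))`, i.e. the row of `psiMat` belonging to `x`. -/
def featureVec (ψ : ℕ → 𝒳 → ℝ) (k : ℕ) (x : 𝒳) : Fin k → ℝ :=
  fun a => ψ a x

lemma transpose_psiMat_mul_psiMat (ψ : ℕ → 𝒳 → ℝ) (k : ℕ) {n : ℕ} (X : Fin n → 𝒳) :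
    (psiMat ψ k X)ᵀ * psiMat ψ k X =
      ∑ i, vecMulVec (featureVec ψ k (X i)) (featureVec ψ k (X i)) := by
  ext a b
  simp [mul_apply, psiMat, featureVec, vecMulVec_apply, Matrix.sum_apply]

lemma isHermitian_transpose_psiMat_mul_psiMat (ψ : ℕ → 𝒳 → ℝ) (k : ℕ) {n : ℕ} (X : Fin n → 𝒳) :
    ((psiMat ψ k X)ᵀ * psiMat ψ k X).IsHermitian :=
  isHermitian_conjTranspose_mul_self _

lemma eigval_transpose_psiMat_mul_psiMat_nonneg (ψ : ℕ → 𝒳 → ℝ) {j k : ℕ} (hj : j - 1 < k)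
    {n : ℕ} (X : Fin n → 𝒳) : 0 ≤ eigval ((psiMat ψ k X)ᵀ * psiMat ψ k X) j := by
  refine le_eigval_of_smul_one_le (isHermitian_transpose_psiMat_mul_psiMat ψ k X) hj ?_
  rw [zero_smul]
  exact Matrix.nonneg_iff_posSemidef.2 (posSemidef_conjTranspose_mul_self _)

variable [MeasurableSpace 𝒳] {μ : Measure 𝒳} {ψ : ℕ → 𝒳 → ℝ} {k : ℕ} {B : ℝ}

lemma OrthonormalFamily.isBoundedIsotropic (hψ : OrthonormalFamily μ ψ)
    (hB : ∀ᵐ x ∂μ, ∑ i ∈ Finset.range k, ψ i x ^ 2 ≤ B * k) :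
    IsBoundedIsotropic μ (featureVec ψ k) (B * k) where
  aestronglyMeasurable :=
    (aemeasurable_pi_lambda (featureVec ψ k) fun a =>
      (hψ.1 a).aestronglyMeasurable.aemeasurable).aestronglyMeasurable
  dotProduct_le := hB.mono fun x hx => by
    simpa [dotProduct, featureVec, ← pow_two, Fin.sum_univ_eq_sum_range (ψ · x ^ 2)] using hx
  integral_mul a b := by
    simpa [featureVec, one_apply, Fin.ext_iff] using hψ.2 a b

variable [IsProbabilityMeasure μ]

instance (n : ℕ) : IsProbabilityMeasure (iid μ n) :=
  inferInstanceAs (IsProbabilityMeasure (Measure.pi fun _ => μ))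

lemma OrthonormalFamily.one_le_of_ae_sum_sq_le (hψ : OrthonormalFamily μ ψ) (hk : 1 ≤ k)
    (hB : ∀ᵐ x ∂μ, ∑ i ∈ Finset.range k, ψ i x ^ 2 ≤ B * k) : 1 ≤ B := by
  have hcard : (k : ℝ) ≤ B * k := by simpa using (hψ.isBoundedIsotropic hB).card_le
  exact le_of_mul_le_mul_right (by simpa using hcard) (Nat.cast_pos.2 hk)

lemma OrthonormalFamily.measure_not_eigval_one_le (hψ : OrthonormalFamily μ ψ) (hk : 1 ≤ k)
    (hB : ∀ᵐ x ∂μ, ∑ i ∈ Finset.range k, ψ i x ^ 2 ≤ B * k) (n : ℕ) :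
    iid μ n {X | ¬ eigval ((psiMat ψ k X)ᵀ * psiMat ψ k X) 1 ≤
        10 * max (n : ℝ) (B * k * Real.log k)} ≤
      ENNReal.ofReal (Real.exp (-(1 / 100 / B) * max ((n : ℝ) / k) (Real.log k))) := by
  have hB1 := hψ.one_le_of_ae_sum_sq_le hk hB
  have hk0 : (0 : ℝ) < k := Nat.cast_pos.2 hk
  have : Nonempty (Fin k) := ⟨⟨0, hk⟩⟩
  set N : ℝ := max (n : ℝ) (B * k * Real.log k)
  have : 0 ≤ N := n.cast_nonneg.trans (le_max_left _ _)
  have hlog : Real.log k ≤ N / (B * k) := by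
    rw [le_div_iff₀' (by positivity)]
    exact le_max_right _ _
  have hn : n / (B * k) ≤ N / (B * k) := by
    gcongr
    exact le_max_left _ _
  have hrate : max ((n : ℝ) / k) (Real.log k) / B ≤ N / (B * k) :=
    max_div_log_div_le hB1 hk (le_max_left _ _) (le_max_right _ _)
  calc
    _ ≤ iid μ n {X | ¬ ∑ i, vecMulVec (featureVec ψ k (X i)) (featureVec ψ k (X i)) ≤
          (10 * N) • 1} :=
      measure_mono fun X (hX : ¬ _ ≤ _) hle => hX (eigval_le_of_le_smul_one
        (isHermitian_transpose_psiMat_mul_psiMat ψ k X) (by omega)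
        ((transpose_psiMat_mul_psiMat ψ k X).trans_le hle))
    _ ≤ ENNReal.ofReal (Fintype.card (Fin k) *
          Real.exp (3 * n / (B * k) - 10 * N / (2 * (B * k)))) :=
      (hψ.isBoundedIsotropic hB).measure_pi_not_sum_vecMulVec_le_smul_one_le n (by positivity)
    _ = ENNReal.ofReal (Real.exp (Real.log k + 3 * (n / (B * k)) - 5 * (N / (B * k)))) := by
      rw [Fintype.card_fin, ← Real.exp_log hk0, ← Real.exp_add, Real.log_exp]
      congr 2
      ring
    _ ≤ _ := by
      rw [neg_mul, div_mul_eq_mul_div (1 / 100), mul_div_assoc (1 / 100)]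
      gcongr
      have : 0 ≤ N / (B * k) := by positivity
      linarith

lemma OrthonormalFamily.measure_not_le_eigval (hψ : OrthonormalFamily μ ψ) (hk : 1 ≤ k)
    (hB : ∀ᵐ x ∂μ, ∑ i ∈ Finset.range k, ψ i x ^ 2 ≤ B * k) {n : ℕ}
    (hn : 50 * B * k * Real.log k ≤ n) :
    iid μ n {X | ¬ (n / 10 : ℝ) ≤ eigval ((psiMat ψ k X)ᵀ * psiMat ψ k X) k} ≤
      ENNReal.ofReal (Real.exp (-(1 / 100 / B) * max ((n : ℝ) / k) (Real.log k))) := by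
  have hB1 := hψ.one_le_of_ae_sum_sq_le hk hB
  have hk0 : (0 : ℝ) < k := Nat.cast_pos.2 hk
  have : Nonempty (Fin k) := ⟨⟨0, hk⟩⟩
  have hlog : Real.log k ≤ 1 / 50 * (n / (B * k)) := by
    rw [← mul_div_assoc, le_div_iff₀' (by positivity)]
    linarith
  have hlog0 := Real.log_natCast_nonneg k
  have hrate : max ((n : ℝ) / k) (Real.log k) / B ≤ n / (B * k) := by
    refine max_div_log_div_le hB1 hk le_rfl (le_trans ?_ hn)
    gcongr
    linarith
  calc
    _ ≤ iid μ n {X | ¬ (n / 10 : ℝ) • 1 ≤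
          ∑ i, vecMulVec (featureVec ψ k (X i)) (featureVec ψ k (X i))} :=
      measure_mono fun X (hX : ¬ _ ≤ _) hle => hX (le_eigval_of_smul_one_le
        (isHermitian_transpose_psiMat_mul_psiMat ψ k X) (by omega)
        (hle.trans_eq (transpose_psiMat_mul_psiMat ψ k X).symm))
    _ ≤ ENNReal.ofReal (Fintype.card (Fin k) * Real.exp (-(n / (15 * (B * k))))) :=
      (hψ.isBoundedIsotropic hB).measure_pi_not_smul_one_le_sum_vecMulVec_le n
    _ = ENNReal.ofReal (Real.exp (Real.log k - 1 / 15 * (n / (B * k)))) := by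
      rw [Fintype.card_fin, ← Real.exp_log hk0, ← Real.exp_add, Real.log_exp]
      congr 2
      ring
    _ ≤ _ := by
      rw [neg_mul, div_mul_eq_mul_div (1 / 100), mul_div_assoc (1 / 100)]
      gcongr
      have : 0 ≤ n / (B * k) := by positivity
      linarith

theorem OrthonormalFamily.eigval_bounds (hψ : OrthonormalFamily μ ψ) (hk : 1 ≤ k)
    (hB : ∀ᵐ x ∂μ, ∑ i ∈ Finset.range k, ψ i x ^ 2 ≤ B * k) (n : ℕ) :
    ENNReal.ofReal
        (1 - 2 * Real.exp (-(1 / 100 / B) * max ((n : ℝ) / k) (Real.log k))) ≤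
      iid μ n {X |
        max (√n - √(1 / 2 * max (n : ℝ) (B * (1 + 1 / (1 / 100)) * k * Real.log k))) 0 ^ 2 ≤
            eigval ((psiMat ψ k X)ᵀ * psiMat ψ k X) k ∧
          eigval ((psiMat ψ k X)ᵀ * psiMat ψ k X) 1 ≤
            10 * max (n : ℝ) (B * k * Real.log k)} := by
  have hupper := hψ.measure_not_eigval_one_le hk hB n
  rcases le_total (50 * B * k * Real.log k) n with hn | hn
  · refine ofReal_one_sub_two_mul_le_measure (Real.exp_nonneg _)
      (hψ.measure_not_le_eigval hk hB hn) hupper fun X hX => ⟨?_, not_not.1 hX.2⟩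
    exact (max_sqrt_sub_sqrt_half_max_sq_le n.cast_nonneg _).trans (not_not.1 hX.1)
  · refine ofReal_one_sub_two_mul_le_measure (s := ∅) (Real.exp_nonneg _) (by simp) hupper
      fun X hX => ⟨?_, not_not.1 hX.2⟩
    have hB1 := hψ.one_le_of_ae_sum_sq_le hk hB
    have := Real.log_natCast_nonneg k
    rw [max_sqrt_sub_sqrt_half_max_eq_zero, zero_pow two_ne_zero]
    · exact eigval_transpose_psiMat_mul_psiMat_nonneg ψ (by omega) X
    · have : 0 ≤ B * k * Real.log k := by positivity
      linarith

theorem OrthonormalFamily.eigval_bounds_of_log_le (hψ : OrthonormalFamily μ ψ) (hk : 1 ≤ k)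
    (hB : ∀ᵐ x ∂μ, ∑ i ∈ Finset.range k, ψ i x ^ 2 ≤ B * k) {n : ℕ}
    (hn : 50 * B * k * Real.log k ≤ n) :
    ENNReal.ofReal (1 - 2 * Real.exp (-(1 / 100 / B) * ((n : ℝ) / k))) ≤
      iid μ n {X |
        1 / 10 * (n : ℝ) ≤ eigval ((psiMat ψ k X)ᵀ * psiMat ψ k X) k ∧
          eigval ((psiMat ψ k X)ᵀ * psiMat ψ k X) k ≤
            eigval ((psiMat ψ k X)ᵀ * psiMat ψ k X) 1 ∧
          eigval ((psiMat ψ k X)ᵀ * psiMat ψ k X) 1 ≤ 10 * n} := by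
  have hB1 := hψ.one_le_of_ae_sum_sq_le hk hB
  have hrate : ENNReal.ofReal (Real.exp (-(1 / 100 / B) * max ((n : ℝ) / k) (Real.log k))) ≤
      ENNReal.ofReal (Real.exp (-(1 / 100 / B) * ((n : ℝ) / k))) := by
    simp only [neg_mul]
    gcongr
    exact le_max_left _ _
  have hmax : max (n : ℝ) (B * k * Real.log k) = n := by
    refine max_eq_left ?_
    have : 0 ≤ B * k * Real.log k := by positivity
    linarith
  refine ofReal_one_sub_two_mul_le_measure (Real.exp_nonneg _)
    ((hψ.measure_not_le_eigval hk hB hn).trans hrate)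
    ((hψ.measure_not_eigval_one_le hk hB n).trans hrate) fun X hX => ⟨?_, ?_, ?_⟩
  · linarith [not_not.1 hX.1]
  · exact eigval_le_eigval_of_le hk (by omega)
  · simpa only [hmax] using not_not.1 hX.2

end DesignMatrix

theorem singular_value_concentration_general :
    ∃ c' : ℝ, 0 < c' ∧ ∃ c₂ : ℝ, 0 < c₂ ∧
      ((∀ (𝒳 : Type u) [MeasurableSpace 𝒳] (μ : Measure 𝒳) [IsProbabilityMeasure μ]
          (ψ : ℕ → 𝒳 → ℝ), OrthonormalFamily μ ψ →
          ∀ n k : ℕ, 1 ≤ k → ∀ B : ℝ, (∀ᵐ x ∂μ, ∑ i ∈ Finset.range k, ψ i x ^ 2 ≤ B * k) →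
            ENNReal.ofReal
                (1 - 2 * Real.exp (-(c' / B) * max ((n : ℝ) / k) (Real.log k))) ≤
              iid μ n {X |
                max (√n - √(1 / 2 * max (n : ℝ) (B * (1 + 1 / c') * k * Real.log k))) 0 ^ 2 ≤
                  eigval ((psiMat ψ k X)ᵀ * psiMat ψ k X) k ∧
                eigval ((psiMat ψ k X)ᵀ * psiMat ψ k X) 1 ≤
                  c₂ * max (n : ℝ) (B * k * Real.log k)}) ∧
        ∃ c : ℝ, 0 < c ∧ ∃ c₁ : ℝ, 0 < c₁ ∧
          ∀ (𝒳 : Type u) [MeasurableSpace 𝒳] (μ : Measure 𝒳) [IsProbabilityMeasure μ]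
            (ψ : ℕ → 𝒳 → ℝ), OrthonormalFamily μ ψ →
            ∀ n k : ℕ, 1 ≤ k → ∀ B : ℝ, (∀ᵐ x ∂μ, ∑ i ∈ Finset.range k, ψ i x ^ 2 ≤ B * k) →
              c * B * k * Real.log k ≤ n →
              ENNReal.ofReal (1 - 2 * Real.exp (-(c' / B) * ((n : ℝ) / k))) ≤
                iid μ n {X |
                  c₁ * n ≤ eigval ((psiMat ψ k X)ᵀ * psiMat ψ k X) k ∧
                  eigval ((psiMat ψ k X)ᵀ * psiMat ψ k X) k ≤
                    eigval ((psiMat ψ k X)ᵀ * psiMat ψ k X) 1 ∧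
                  eigval ((psiMat ψ k X)ᵀ * psiMat ψ k X) 1 ≤ c₂ * n}) :=
  ⟨1 / 100, by norm_num, 10, by norm_num,
    fun _ _ _ _ _ hψ n _ hk _ hB => hψ.eigval_bounds hk hB n,
    50, by norm_num, 1 / 10, by norm_num,
    fun _ _ _ _ _ hψ _ _ hk _ hB hn => hψ.eigval_bounds_of_log_le hk hB hn⟩

lemma BetaFinite.ae_sum_sq_le [MeasurableSpace 𝒳] {μ : Measure 𝒳} {lam : ℕ → ℝ} {ψ : ℕ → 𝒳 → ℝ}
    {k : ℕ} (h : BetaFinite μ lam ψ k) (hk : 1 ≤ k) :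
    ∀ᵐ x ∂μ, ∑ i ∈ Finset.range k, ψ i x ^ 2 ≤ betaQ μ lam ψ k * k := by
  filter_upwards [ae_le_essSup h] with x hx
  rw [← div_le_iff₀ (Nat.cast_pos.2 hk)]
  exact ((le_max_left _ _).trans (le_max_left _ _)).trans hx

theorem singular_value_concentration :
    ∃ c' : ℝ, 0 < c' ∧ ∃ c₂ : ℝ, 0 < c₂ ∧
      ((∀ (𝒳 : Type u) [MeasurableSpace 𝒳] (μ : Measure 𝒳) [IsProbabilityMeasure μ]
          (lam : ℕ → ℝ) (ψ : ℕ → 𝒳 → ℝ),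
          (∀ i, 0 ≤ lam i) → Summable lam → OrthonormalFamily μ ψ →
          ∀ n k : ℕ, 1 ≤ k → k ≤ n → BetaFinite μ lam ψ k →
            ENNReal.ofReal
                (1 - 2 * Real.exp (-(c' / betaQ μ lam ψ k) *
                  max ((n : ℝ) / (k : ℝ)) (Real.log k))) ≤
              iid μ n {X : Fin n → 𝒳 |
                (max (Real.sqrt n -
                      Real.sqrt ((1 / 2 : ℝ) *
                        max (n : ℝ) (betaQ μ lam ψ k * (1 + 1 / c') * (k : ℝ) * Real.log k)))
                    0) ^ 2 ≤
                  eigval ((psiMat ψ k X)ᵀ * psiMat ψ k X) k ∧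
                eigval ((psiMat ψ k X)ᵀ * psiMat ψ k X) 1 ≤
                  c₂ * max (n : ℝ) (betaQ μ lam ψ k * (k : ℝ) * Real.log k)}) ∧
        ∃ c : ℝ, 0 < c ∧ ∃ c₁ : ℝ, 0 < c₁ ∧
          ∀ (𝒳 : Type u) [MeasurableSpace 𝒳] (μ : Measure 𝒳) [IsProbabilityMeasure μ]
            (lam : ℕ → ℝ) (ψ : ℕ → 𝒳 → ℝ),
            (∀ i, 0 ≤ lam i) → Summable lam → OrthonormalFamily μ ψ →
            ∀ n k : ℕ, 1 ≤ k → k ≤ n → BetaFinite μ lam ψ k →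
              c * betaQ μ lam ψ k * (k : ℝ) * Real.log k ≤ (n : ℝ) →
              ENNReal.ofReal
                  (1 - 2 * Real.exp (-(c' / betaQ μ lam ψ k) * ((n : ℝ) / (k : ℝ)))) ≤
                iid μ n {X : Fin n → 𝒳 |
                  c₁ * (n : ℝ) ≤ eigval ((psiMat ψ k X)ᵀ * psiMat ψ k X) k ∧
                  eigval ((psiMat ψ k X)ᵀ * psiMat ψ k X) k ≤
                    eigval ((psiMat ψ k X)ᵀ * psiMat ψ k X) 1 ∧
                  eigval ((psiMat ψ k X)ᵀ * psiMat ψ k X) 1 ≤ c₂ * (n : ℝ)}) := by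
  obtain ⟨c', hc', c₂, hc₂, hbounds, c, hc, c₁, hc₁, hwell⟩ := singular_value_concentration_general
  refine ⟨c', hc', c₂, hc₂, fun 𝒳 _ μ _ lam ψ _ _ hψ n k hk _ hβ => ?_, c, hc, c₁, hc₁,
    fun 𝒳 _ μ _ lam ψ _ _ hψ n k hk _ hβ => ?_⟩
  · exact hbounds 𝒳 μ ψ hψ n k hk _ (hβ.ae_sum_sq_le hk)
  · exact hwell 𝒳 μ ψ hψ n k hk _ (hβ.ae_sum_sq_le hk)

end KRRPaper

end
end

section
/- Extension of Ostrowski's theorem to non-square matrices. Let n, k ≥ 1, let λ_1 ≥ λ_2 ≥ … ≥ λ_k > 0 be positive reals, let Ψ ∈ ℝ^{n×k} be any matrix, set D := (1/n)·Ψ·Ψ^⊤ ∈ ℝ^{n×n} and B := (1/n)·Ψ·diag(λ_1,…,λ_k)·Ψ^⊤ ∈ ℝ^{n×n}. Then for every i with 1 ≤ i ≤ min(k, n): λ_{i+k−min(n,k)}·μ_{min(n,k)}(D) ≤ μ_i(B) ≤ λ_i·μ₁(D). -/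
open MeasureTheory Matrix Filter

noncomputable section

namespace KRRPaper

universe u

variable {𝒳 : Type u}

/-! The Courant–Fischer principle bounds `μ_i(B)` by the Rayleigh quotient of `B` over any subspace
of suitable dimension. For `B = Ψ Λ Ψ*` the right subspace consists of the vectors `x` in a span of
eigenvectors of `Ψ Ψ*` for which `Ψ* x` lies in a span of eigenvectors of `Λ`: there the form
`⟪Λ (Ψ* x), Ψ* x⟫` compares with `‖Ψ* x‖² = ⟪(Ψ Ψ*) x, x⟫`, which in turn compares with `‖x‖²`.
The factor `1 / n` is absorbed by rescaling `Ψ`. -/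

open Module Submodule

section Finrank

variable {K V W : Type*} [DivisionRing K] [AddCommGroup V] [Module K V] [AddCommGroup W]
  [Module K W]

theorem finrank_span_image {ι : Type*} {v : ι → V} (hv : LinearIndependent K v) (s : Finset ι) :
    finrank K (span K (v '' s)) = s.card := by
  rw [Set.image_eq_range]
  exact (finrank_span_eq_card (hv.comp _ Subtype.val_injective)).trans (Fintype.card_coe s)

variable [FiniteDimensional K V]

theorem finrank_add_finrank_le_finrank_inf_comap [FiniteDimensional K W] (f : V →ₗ[K] W)
    (p : Submodule K V) (q : Submodule K W) :
    finrank K p + finrank K q ≤ finrank K ↥(p ⊓ q.comap f) + finrank K W := by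
  let g : p →ₗ[K] W ⧸ q := q.mkQ ∘ₗ f ∘ₗ p.subtype
  have hker : finrank K (LinearMap.ker g) = finrank K ↥(p ⊓ q.comap f) := by
    rw [← map_comap_subtype, finrank_map_subtype_eq, LinearMap.ker_comp,
      Submodule.ker_mkQ, comap_comp]
  have hrange : finrank K (LinearMap.range g) ≤ finrank K (W ⧸ q) := finrank_le _
  have hrank := g.finrank_range_add_finrank_ker
  have hquot := q.finrank_quotient_add_finrank
  omega

theorem exists_mem_inf_ne_zero_of_finrank_lt {p q : Submodule K V}
    (h : finrank K V < finrank K p + finrank K q) : ∃ x ∈ p ⊓ q, x ≠ 0 := by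
  refine exists_mem_ne_zero_of_ne_bot fun hbot => h.not_ge ?_
  exact finrank_add_finrank_le_of_disjoint (disjoint_iff.mpr hbot)

end Finrank

section CourantFischer

variable {𝕜 E ι : Type*} [RCLike 𝕜] [NormedAddCommGroup E] [InnerProductSpace 𝕜 E]

theorem inner_eq_zero_of_mem_span_image {v : ι → E} (hv : Orthonormal 𝕜 v) {s : Set ι} {x : E}
    (hx : x ∈ span 𝕜 (v '' s)) {i : ι} (hi : i ∉ s) : inner 𝕜 (v i) x = 0 := by
  suffices span 𝕜 (v '' s) ≤ (innerₛₗ 𝕜 (v i)).ker from this hx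
  rw [span_le]
  rintro _ ⟨j, hj, rfl⟩
  exact hv.2 (ne_of_mem_of_not_mem hj hi).symm

variable [Fintype ι] {T : E →ₗ[𝕜] E} {n : ℕ}

theorem re_inner_map_self_eq_sum (b : OrthonormalBasis ι 𝕜 E) {μ : ι → ℝ}
    (hb : ∀ i, T (b i) = (μ i : 𝕜) • b i) (x : E) :
    RCLike.re (inner 𝕜 (T x) x) = ∑ i, μ i * ‖inner 𝕜 (b i) x‖ ^ 2 := by
  have hT : T x = ∑ i, (μ i : 𝕜) • inner 𝕜 (b i) x • b i := by
    conv_lhs => rw [← b.sum_repr' x]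
    simp only [map_sum, map_smul, hb, smul_comm (μ _ : 𝕜)]
  simp only [hT, sum_inner, inner_smul_left, RCLike.conj_ofReal, map_sum, RCLike.re_ofReal_mul,
    RCLike.conj_mul]
  norm_cast

theorem mul_norm_sq_le_re_inner_map_self (b : OrthonormalBasis ι 𝕜 E) {μ : ι → ℝ}
    (hb : ∀ i, T (b i) = (μ i : 𝕜) • b i) {s : Set ι} {c : ℝ} (hc : ∀ i ∈ s, c ≤ μ i) {x : E}
    (hx : x ∈ span 𝕜 (b '' s)) : c * ‖x‖ ^ 2 ≤ RCLike.re (inner 𝕜 (T x) x) := by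
  rw [re_inner_map_self_eq_sum b hb, ← b.sum_sq_norm_inner_right, Finset.mul_sum]
  refine Finset.sum_le_sum fun i _ => ?_
  by_cases hi : i ∈ s
  · exact mul_le_mul_of_nonneg_right (hc i hi) (sq_nonneg _)
  · simp [inner_eq_zero_of_mem_span_image b.orthonormal hx hi]

theorem re_inner_map_self_le_mul_norm_sq (b : OrthonormalBasis ι 𝕜 E) {μ : ι → ℝ}
    (hb : ∀ i, T (b i) = (μ i : 𝕜) • b i) {s : Set ι} {c : ℝ} (hc : ∀ i ∈ s, μ i ≤ c) {x : E}
    (hx : x ∈ span 𝕜 (b '' s)) : RCLike.re (inner 𝕜 (T x) x) ≤ c * ‖x‖ ^ 2 := by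
  have h := mul_norm_sq_le_re_inner_map_self (T := -T) (μ := -μ) (c := -c) b
    (by simp [hb]) (fun i hi => neg_le_neg (hc i hi)) hx
  simpa using h

theorem exists_forall_mul_norm_sq_le (b : OrthonormalBasis (Fin n) 𝕜 E) {μ : Fin n → ℝ}
    (hμ : Antitone μ) (hb : ∀ i, T (b i) = (μ i : 𝕜) • b i) (i : Fin n) :
    ∃ p : Submodule 𝕜 E, finrank 𝕜 p = i + 1 ∧
      ∀ x ∈ p, μ i * ‖x‖ ^ 2 ≤ RCLike.re (inner 𝕜 (T x) x) := by
  refine ⟨span 𝕜 (b '' (Finset.Iic i : Finset (Fin n))), ?_, fun x hx => ?_⟩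
  · rw [finrank_span_image b.orthonormal.linearIndependent, Fin.card_Iic]
  · exact mul_norm_sq_le_re_inner_map_self b hb (fun j hj => hμ (Finset.mem_Iic.mp hj)) hx

theorem exists_forall_re_inner_map_self_le (b : OrthonormalBasis (Fin n) 𝕜 E) {μ : Fin n → ℝ}
    (hμ : Antitone μ) (hb : ∀ i, T (b i) = (μ i : 𝕜) • b i) (i : Fin n) :
    ∃ p : Submodule 𝕜 E, finrank 𝕜 p + i = n ∧
      ∀ x ∈ p, RCLike.re (inner 𝕜 (T x) x) ≤ μ i * ‖x‖ ^ 2 := by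
  refine ⟨span 𝕜 (b '' (Finset.Ici i : Finset (Fin n))), ?_, fun x hx => ?_⟩
  · rw [finrank_span_image b.orthonormal.linearIndependent, Fin.card_Ici,
      Nat.sub_add_cancel i.is_le']
  · exact re_inner_map_self_le_mul_norm_sq b hb (fun j hj => hμ (Finset.mem_Ici.mp hj)) hx

variable [FiniteDimensional 𝕜 E] (hT : T.IsSymmetric) (hn : finrank 𝕜 E = n)

theorem le_of_forall_re_inner_map_self {p q : Submodule 𝕜 E}
    (hpq : finrank 𝕜 E < finrank 𝕜 p + finrank 𝕜 q) {a c : ℝ}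
    (ha : ∀ x ∈ p, a * ‖x‖ ^ 2 ≤ RCLike.re (inner 𝕜 (T x) x))
    (hc : ∀ x ∈ q, RCLike.re (inner 𝕜 (T x) x) ≤ c * ‖x‖ ^ 2) : a ≤ c := by
  obtain ⟨x, ⟨hxp, hxq⟩, hx0⟩ := exists_mem_inf_ne_zero_of_finrank_lt hpq
  exact le_of_mul_le_mul_right ((ha x hxp).trans (hc x hxq)) (by positivity)

theorem eigenvalues_le_of_forall_mem {p : Submodule 𝕜 E} {i : Fin n} (hp : n ≤ finrank 𝕜 p + i)
    {c : ℝ} (hc : ∀ x ∈ p, RCLike.re (inner 𝕜 (T x) x) ≤ c * ‖x‖ ^ 2) :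
    hT.eigenvalues hn i ≤ c := by
  obtain ⟨q, hq, hqT⟩ := exists_forall_mul_norm_sq_le (hT.eigenvectorBasis hn)
    (hT.eigenvalues_antitone hn) (hT.apply_eigenvectorBasis hn) i
  exact le_of_forall_re_inner_map_self (by omega) hqT hc

theorem le_eigenvalues_of_forall_mem {p : Submodule 𝕜 E} {i : Fin n} (hp : i < finrank 𝕜 p)
    {c : ℝ} (hc : ∀ x ∈ p, c * ‖x‖ ^ 2 ≤ RCLike.re (inner 𝕜 (T x) x)) :
    c ≤ hT.eigenvalues hn i := by
  obtain ⟨q, hq, hqT⟩ := exists_forall_re_inner_map_self_le (hT.eigenvectorBasis hn)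
    (hT.eigenvalues_antitone hn) (hT.apply_eigenvectorBasis hn) i
  exact le_of_forall_re_inner_map_self (by omega) hc hqT

theorem eigenvalues_eq_of_antitone (b : OrthonormalBasis (Fin n) 𝕜 E) {μ : Fin n → ℝ}
    (hμ : Antitone μ) (hb : ∀ i, T (b i) = (μ i : 𝕜) • b i) : hT.eigenvalues hn = μ := by
  funext i
  obtain ⟨p, hp, hpT⟩ := exists_forall_re_inner_map_self_le b hμ hb i
  obtain ⟨q, hq, hqT⟩ := exists_forall_mul_norm_sq_le b hμ hb i
  exact le_antisymm (eigenvalues_le_of_forall_mem hT hn hp.ge hpT)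
    (le_eigenvalues_of_forall_mem hT hn (by omega) hqT)

end CourantFischer

section Ostrowski

variable {𝕜 E F : Type*} [RCLike 𝕜] [NormedAddCommGroup E] [InnerProductSpace 𝕜 E]
  [FiniteDimensional 𝕜 E] [NormedAddCommGroup F] [InnerProductSpace 𝕜 F] [FiniteDimensional 𝕜 F]
  {n k : ℕ} (hn : finrank 𝕜 E = n) (hk : finrank 𝕜 F = k)

theorem re_inner_self_comp_adjoint (Ψ : F →ₗ[𝕜] E) (x : E) :
    RCLike.re (inner 𝕜 ((Ψ ∘ₗ Ψ.adjoint) x) x) = ‖Ψ.adjoint x‖ ^ 2 := by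
  rw [LinearMap.comp_apply, ← LinearMap.adjoint_inner_right, inner_self_eq_norm_sq]

theorem inner_conj_adjoint (Ψ : F →ₗ[𝕜] E) (Λ : F →ₗ[𝕜] F) (x : E) :
    inner 𝕜 ((Ψ ∘ₗ Λ ∘ₗ Ψ.adjoint) x) x = inner 𝕜 (Λ (Ψ.adjoint x)) (Ψ.adjoint x) := by
  rw [LinearMap.comp_apply, LinearMap.comp_apply, ← LinearMap.adjoint_inner_right]

theorem eigenvalues_conj_adjoint_le_mul (Ψ : F →ₗ[𝕜] E) {Λ : F →ₗ[𝕜] F} (hΛ : Λ.IsSymmetric)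
    {i p : Fin n} {j : Fin k} (hj : 0 ≤ hΛ.eigenvalues hk j) (hjp : (j + p : ℕ) ≤ i) :
    (hΛ.conj_adjoint Ψ).eigenvalues hn i ≤
      hΛ.eigenvalues hk j * Ψ.isSymmetric_self_comp_adjoint.eigenvalues hn p := by
  have hD := Ψ.isSymmetric_self_comp_adjoint
  obtain ⟨U, hU, hUD⟩ := exists_forall_re_inner_map_self_le (hD.eigenvectorBasis hn)
    (hD.eigenvalues_antitone hn) (hD.apply_eigenvectorBasis hn) p
  obtain ⟨V, hV, hVΛ⟩ := exists_forall_re_inner_map_self_le (hΛ.eigenvectorBasis hk)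
    (hΛ.eigenvalues_antitone hk) (hΛ.apply_eigenvectorBasis hk) j
  have hdim := finrank_add_finrank_le_finrank_inf_comap Ψ.adjoint U V
  refine eigenvalues_le_of_forall_mem _ hn (p := U ⊓ V.comap Ψ.adjoint) (by omega) ?_
  rintro x ⟨hxU, hxV⟩
  calc RCLike.re (inner 𝕜 ((Ψ ∘ₗ Λ ∘ₗ Ψ.adjoint) x) x)
      = RCLike.re (inner 𝕜 (Λ (Ψ.adjoint x)) (Ψ.adjoint x)) := by rw [inner_conj_adjoint]
    _ ≤ hΛ.eigenvalues hk j * ‖Ψ.adjoint x‖ ^ 2 := hVΛ _ hxV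
    _ = hΛ.eigenvalues hk j * RCLike.re (inner 𝕜 ((Ψ ∘ₗ Ψ.adjoint) x) x) := by
        rw [re_inner_self_comp_adjoint]
    _ ≤ hΛ.eigenvalues hk j * (hD.eigenvalues hn p * ‖x‖ ^ 2) :=
        mul_le_mul_of_nonneg_left (hUD x hxU) hj
    _ = hΛ.eigenvalues hk j * hD.eigenvalues hn p * ‖x‖ ^ 2 := (mul_assoc _ _ _).symm

theorem mul_le_eigenvalues_conj_adjoint (Ψ : F →ₗ[𝕜] E) {Λ : F →ₗ[𝕜] F} (hΛ : Λ.IsSymmetric)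
    {i p : Fin n} {j : Fin k} (hj : 0 ≤ hΛ.eigenvalues hk j) (hjp : i + k ≤ j + p + 1) :
    hΛ.eigenvalues hk j * Ψ.isSymmetric_self_comp_adjoint.eigenvalues hn p ≤
      (hΛ.conj_adjoint Ψ).eigenvalues hn i := by
  have hD := Ψ.isSymmetric_self_comp_adjoint
  obtain ⟨U, hU, hUD⟩ := exists_forall_mul_norm_sq_le (hD.eigenvectorBasis hn)
    (hD.eigenvalues_antitone hn) (hD.apply_eigenvectorBasis hn) p
  obtain ⟨V, hV, hVΛ⟩ := exists_forall_mul_norm_sq_le (hΛ.eigenvectorBasis hk)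
    (hΛ.eigenvalues_antitone hk) (hΛ.apply_eigenvectorBasis hk) j
  have hdim := finrank_add_finrank_le_finrank_inf_comap Ψ.adjoint U V
  refine le_eigenvalues_of_forall_mem _ hn (p := U ⊓ V.comap Ψ.adjoint) (by omega) ?_
  rintro x ⟨hxU, hxV⟩
  calc hΛ.eigenvalues hk j * hD.eigenvalues hn p * ‖x‖ ^ 2
      = hΛ.eigenvalues hk j * (hD.eigenvalues hn p * ‖x‖ ^ 2) := mul_assoc _ _ _
    _ ≤ hΛ.eigenvalues hk j * RCLike.re (inner 𝕜 ((Ψ ∘ₗ Ψ.adjoint) x) x) :=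
        mul_le_mul_of_nonneg_left (hUD x hxU) hj
    _ = hΛ.eigenvalues hk j * ‖Ψ.adjoint x‖ ^ 2 := by rw [re_inner_self_comp_adjoint]
    _ ≤ RCLike.re (inner 𝕜 (Λ (Ψ.adjoint x)) (Ψ.adjoint x)) := hVΛ _ hxV
    _ = RCLike.re (inner 𝕜 ((Ψ ∘ₗ Λ ∘ₗ Ψ.adjoint) x) x) := by rw [inner_conj_adjoint]

end Ostrowski

section Eigval

variable {n : ℕ}

theorem eigval_eq_eigenvalues {M : Matrix (Fin n) (Fin n) ℝ}
    {T : EuclideanSpace ℝ (Fin n) →ₗ[ℝ] EuclideanSpace ℝ (Fin n)} (hMT : M.toEuclideanLin = T)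
    (hT : T.IsSymmetric) (j : Fin n) :
    eigval M (j + 1) = hT.eigenvalues finrank_euclideanSpace_fin j := by
  subst hMT
  have hM : M.IsHermitian := isSymmetric_toEuclideanLin_iff.mp hT
  let σ : Fin n ≃ Fin n := Fin.revPerm.trans (Tuple.sort hM.eigenvalues)
  have hσ : Antitone (hM.eigenvalues ∘ σ) :=
    (Tuple.monotone_sort hM.eigenvalues).comp_antitone fun _ _ h => Fin.rev_le_rev.mpr h
  have hbasis (l : Fin n) : M.toEuclideanLin (hM.eigenvectorBasis.reindex σ.symm l) =
      (hM.eigenvalues ∘ σ) l • hM.eigenvectorBasis.reindex σ.symm l := by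
    ext m
    simpa using congrFun (hM.mulVec_eigenvectorBasis (σ l)) m
  rw [eigenvalues_eq_of_antitone hT _ _ hσ hbasis, eigval, dif_pos hM, dif_pos (by simp)]
  rfl

theorem eigval_diagonal {d : Fin n → ℝ} (hd : Antitone d) (j : Fin n) :
    eigval (diagonal d) (j + 1) = d j := by
  have hsymm : (diagonal d).toEuclideanLin.IsSymmetric :=
    isSymmetric_toEuclideanLin_iff.mpr (isHermitian_diagonal d)
  rw [eigval_eq_eigenvalues rfl hsymm,
    eigenvalues_eq_of_antitone hsymm _ (EuclideanSpace.basisFun (Fin n) ℝ) hd]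
  intro i
  ext l
  simp [toLpLin_apply]

end Eigval

theorem smul_mul_transpose_self {m n : Type*} [Fintype n] {c : ℝ} (hc : 0 ≤ c)
    (Ψ : Matrix m n ℝ) : c • (Ψ * Ψᵀ) = (√c • Ψ) * (√c • Ψ)ᵀ := by
  simp only [transpose_smul, Matrix.smul_mul, Matrix.mul_smul, smul_smul, Real.mul_self_sqrt hc]

theorem smul_mul_mul_transpose_self {m n : Type*} [Fintype n] {c : ℝ} (hc : 0 ≤ c)
    (Ψ : Matrix m n ℝ) (A : Matrix n n ℝ) : c • (Ψ * A * Ψᵀ) = (√c • Ψ) * A * (√c • Ψ)ᵀ := by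
  simp only [transpose_smul, Matrix.smul_mul, Matrix.mul_smul, smul_smul, Real.mul_self_sqrt hc]

section Matrix

variable {𝕜 m n : Type*} [RCLike 𝕜] [Fintype m] [Fintype n] [DecidableEq m] [DecidableEq n]

theorem toEuclideanLin_mul_conjTranspose (Ψ : Matrix m n 𝕜) :
    (Ψ * Ψᴴ).toEuclideanLin = Ψ.toEuclideanLin ∘ₗ Ψ.toEuclideanLin.adjoint := by
  rw [← toEuclideanLin_conjTranspose_eq_adjoint]
  exact toLpLin_mul_same _ _ _

theorem toEuclideanLin_mul_mul_conjTranspose (Ψ : Matrix m n 𝕜) (A : Matrix n n 𝕜) :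
    (Ψ * A * Ψᴴ).toEuclideanLin =
      Ψ.toEuclideanLin ∘ₗ A.toEuclideanLin ∘ₗ Ψ.toEuclideanLin.adjoint := by
  rw [← toEuclideanLin_conjTranspose_eq_adjoint, Matrix.mul_assoc]
  exact (toLpLin_mul_same _ _ _).trans (congrArg _ (toLpLin_mul_same _ _ _))

end Matrix

theorem ostrowski_extension_general {n k : ℕ} {c : ℝ} (hc : 0 ≤ c) (Ψ : Matrix (Fin n) (Fin k) ℝ)
    {A : Matrix (Fin k) (Fin k) ℝ} (hA : A.IsHermitian) {i p : Fin n} {j : Fin k}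
    (hj : 0 ≤ eigval A (j + 1)) :
    (i + k ≤ j + p + 1 → eigval A (j + 1) * eigval (c • (Ψ * Ψᵀ)) (p + 1) ≤
        eigval (c • (Ψ * A * Ψᵀ)) (i + 1)) ∧
      ((j + p : ℕ) ≤ i → eigval (c • (Ψ * A * Ψᵀ)) (i + 1) ≤
        eigval A (j + 1) * eigval (c • (Ψ * Ψᵀ)) (p + 1)) := by
  have hΛ := isSymmetric_toEuclideanLin_iff.mpr hA
  have hD : (c • (Ψ * Ψᵀ)).toEuclideanLin =
      (√c • Ψ).toEuclideanLin ∘ₗ (√c • Ψ).toEuclideanLin.adjoint := by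
    rw [← toEuclideanLin_mul_conjTranspose, conjTranspose_eq_transpose_of_trivial,
      smul_mul_transpose_self hc]
  have hB : (c • (Ψ * A * Ψᵀ)).toEuclideanLin =
      (√c • Ψ).toEuclideanLin ∘ₗ A.toEuclideanLin ∘ₗ (√c • Ψ).toEuclideanLin.adjoint := by
    rw [← toEuclideanLin_mul_mul_conjTranspose, conjTranspose_eq_transpose_of_trivial,
      smul_mul_mul_transpose_self hc]
  rw [eigval_eq_eigenvalues rfl hΛ] at hj ⊢
  rw [eigval_eq_eigenvalues hD (LinearMap.isSymmetric_self_comp_adjoint _),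
    eigval_eq_eigenvalues hB (hΛ.conj_adjoint _)]
  exact ⟨mul_le_eigenvalues_conj_adjoint _ _ _ hΛ hj, eigenvalues_conj_adjoint_le_mul _ _ _ hΛ hj⟩

theorem ostrowski_extension (n k : ℕ) (hn : 1 ≤ n) (hk : 1 ≤ k) (lam : ℕ → ℝ)
    (hpos : ∀ i, i < k → 0 < lam i)
    (hmono : ∀ i j : ℕ, i ≤ j → j < k → lam j ≤ lam i)
    (Ψ : Matrix (Fin n) (Fin k) ℝ)
    (i : ℕ) (hi1 : 1 ≤ i) (hik : i ≤ min k n) :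
    lam (i + k - min n k - 1) * eigval ((n : ℝ)⁻¹ • (Ψ * Ψᵀ)) (min n k) ≤
        eigval ((n : ℝ)⁻¹ • (Ψ * Matrix.diagonal (fun j : Fin k => lam j) * Ψᵀ)) i ∧
      eigval ((n : ℝ)⁻¹ • (Ψ * Matrix.diagonal (fun j : Fin k => lam j) * Ψᵀ)) i ≤
        lam (i - 1) * eigval ((n : ℝ)⁻¹ • (Ψ * Ψᵀ)) 1 := by
  have hlam : Antitone fun j : Fin k => lam j := fun j l hjl => hmono j l hjl l.isLt
  have bounds (p : Fin n) (j : Fin k) := ostrowski_extension_general (inv_nonneg.mpr n.cast_nonneg)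
    Ψ (isHermitian_diagonal fun j : Fin k => lam j) (i := ⟨i - 1, by omega⟩) (p := p) (j := j)
    (by rw [eigval_diagonal hlam]; exact (hpos j j.isLt).le)
  simp only [eigval_diagonal hlam, Nat.sub_add_cancel hi1] at bounds
  constructor
  · have h := (bounds ⟨min n k - 1, by omega⟩ ⟨i + k - min n k - 1, by omega⟩).1
      (by dsimp only; omega)
    rwa [Fin.val_mk, Nat.sub_add_cancel (le_min hn hk)] at h
  · exact (bounds ⟨0, hn⟩ ⟨i - 1, by omega⟩).2 le_rfl

end KRRPaper

end
end
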